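/- arXiv:1903.00229 — 2 statements merged into one kernel-verified Lean document; each statement's English description precedes it below -/
import Mathlib

section
/- Let f ∈ L_∞(𝕋) have a lacunary Fourier series (f ∈ Λ) and let α > 0. Then for every n ∈ ℕ, ω_α(f, 2^{-n})_{L_∞(𝕋)} ≍ Σ_{k=n}^∞ 2^{-αk}‖(η_{2^k}f)^{(α)}‖_{L_∞(𝕋)}, with implicit constants independent of f and n. -/
open scoped ENNReal
open MeasureTheory

/-- Lebesgue measure on the fundamental interval `[0,2π]` of the circle `𝕋`. -/
noncomputable def circleMeasure : Measure ℝ :=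
  volume.restrict (Set.Icc 0 (2 * Real.pi))

/-- `f` is `2π`-periodic. -/
def Periodic2PiOne (f : ℝ → ℂ) : Prop :=
  ∀ x : ℝ, f (x + 2 * Real.pi) = f x

/-- Forward difference `Δ_h f = f(·+h) − f(·)`. -/
def cDiffOne (h : ℝ) (f : ℝ → ℂ) : ℝ → ℂ :=
  fun x => f (x + h) - f x

/-- Modulus of smoothness `ω_r(f,δ)_p = sup_{|h|≤δ} ‖Δ_h^r f‖_{L_p(𝕋)}`. -/
noncomputable def modSmoothOne (r : ℕ) (p : ℝ≥0∞) (f : ℝ → ℂ) (δ : ℝ) : ℝ≥0∞ :=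
  ⨆ h : {h : ℝ // |h| ≤ δ}, eLpNorm ((cDiffOne h.1)^[r] f) p circleMeasure

/-- Trigonometric polynomials of degree at most `n` on `𝕋`. -/
def TrigPolyOne (n : ℝ) : Set (ℝ → ℂ) :=
  {T | ∃ (s : Finset ℤ) (c : ℤ → ℂ), (∀ k ∈ s, |(k : ℝ)| ≤ n) ∧
    ∀ x : ℝ, T x = ∑ k ∈ s, c k * Complex.exp (Complex.I * k * x)}

/-- Fourier coefficient `\hat f(m) = (2π)^{-1} ∫_𝕋 f(x) e^{-imx} dx`. -/
noncomputable def fourierCoeffOne (f : ℝ → ℂ) (m : ℤ) : ℂ :=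
  (1 / (2 * Real.pi) : ℝ) •
    ∫ x, f x * Complex.exp (-(Complex.I * m * x)) ∂circleMeasure

/-- `f` has lacunary Fourier series: `\hat f(m) = 0` unless `|m|` is a power of `2`. -/
def LacunaryFourier (f : ℝ → ℂ) : Prop :=
  ∀ m : ℤ, (∀ j : ℕ, m.natAbs ≠ 2 ^ j) → fourierCoeffOne f m = 0

/-- Generalized binomial coefficient `binom(α,ν) = α(α−1)⋯(α−ν+1)/ν!`. -/
noncomputable def gBinom (α : ℝ) : ℕ → ℝ
  | 0 => 1
  | n + 1 => gBinom α n * (α - n) / (n + 1)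

/-- Fractional difference `Δ_h^α f(x) = ∑_{ν=0}^∞ (−1)^ν binom(α,ν) f(x + (α−ν)h)`. -/
noncomputable def fracDiffOne (α : ℝ) (h : ℝ) (f : ℝ → ℂ) : ℝ → ℂ :=
  fun x => ∑' ν : ℕ, ((-1 : ℝ) ^ ν * gBinom α ν) • f (x + (α - ν) * h)

/-- Fractional modulus of smoothness `ω_α(f,δ)_p = sup_{|h|≤δ} ‖Δ_h^α f‖_{L_p(𝕋)}`. -/
noncomputable def fracModSmoothOne (α : ℝ) (p : ℝ≥0∞) (f : ℝ → ℂ) (δ : ℝ) : ℝ≥0∞ :=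
  ⨆ h : {h : ℝ // |h| ≤ δ}, eLpNorm (fracDiffOne α h.1 f) p circleMeasure

/-- The Weyl derivative of order `α` of the de la Vallée Poussin mean `η_N f`:
`(η_N f)^{(α)}(x) = ∑_{m≠0} (im)^α η(|m|/N) \hat f(m) e^{imx}`. -/
noncomputable def vdpWeylOne (η : ℝ → ℝ) (α : ℝ) (N : ℕ) (f : ℝ → ℂ) : ℝ → ℂ :=
  fun x => ∑' m : ℤ,
    (if m = 0 then 0 else (Complex.I * (m : ℂ)) ^ (α : ℂ)) *
      ((η (|(m : ℝ)| / N) : ℝ) : ℂ) * fourierCoeffOne f m * Complex.exp (Complex.I * m * x)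

/-!
Riesz products give Sidon's inequality: the `L_∞` norm of a lacunary series is comparable to the
`ℓ¹` norm of its coefficients, hence to `∑_j A_j`, where `A_j` is the total size of the coefficients
at `±2^j`. So the Fourier series of `f` converges absolutely, and both sides of the equivalence turn
into weighted sums of the `A_j`.

The `m`-th coefficient of `Δ_h^α f` is that of `f` times a number of modulus `|2 sin (mh/2)|^α`.
For `|m| = 2^j` its supremum over `|h| ≤ 2^{-n}` is of order `min(1, 2^{j-n})^α`, and the single
step `h = π/(6·2^n)` attains this order at all `j` simultaneously. On the other side, `η_{2^k}` cuts
a lacunary series off sharply to the frequencies `±2^j` with `j < k`, so that `A_j` enters with the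
geometric series `∑_{k≥n, k>j} 2^{-α(k-j)}`, which is again of order `min(1, 2^{j-n})^α`.
-/

section FourierCoefficients

instance : IsFiniteMeasure circleMeasure := by
  unfold circleMeasure; infer_instance

lemma norm_exp_I_mul_intCast_mul_ofReal (m : ℤ) (x : ℝ) :
    ‖Complex.exp (Complex.I * m * x)‖ = 1 := by
  simp [Complex.norm_exp]

lemma norm_exp_neg_I_mul_intCast_mul_ofReal (m : ℤ) (x : ℝ) :
    ‖Complex.exp (-(Complex.I * m * x))‖ = 1 := by
  simp [Complex.norm_exp]

variable {g h : ℝ → ℂ}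

lemma integrable_mul_continuous (hg : Integrable g circleMeasure) (hh : Continuous h) :
    Integrable (fun x => g x * h x) circleMeasure :=
  IntegrableOn.mul_continuousOn hg hh.continuousOn isCompact_Icc

lemma integrable_mul_exp_neg (hg : Integrable g circleMeasure) (m : ℤ) :
    Integrable (fun x : ℝ => g x * Complex.exp (-(Complex.I * m * x))) circleMeasure :=
  integrable_mul_continuous hg (by fun_prop)

lemma fourierCoeffOne_add (hg : Integrable g circleMeasure) (hh : Integrable h circleMeasure)
    (m : ℤ) :
    fourierCoeffOne (fun x => g x + h x) m = fourierCoeffOne g m + fourierCoeffOne h m := by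
  simp only [fourierCoeffOne, add_mul]
  rw [integral_add (integrable_mul_exp_neg hg m) (integrable_mul_exp_neg hh m), smul_add]

lemma fourierCoeffOne_const_mul (c : ℂ) (g : ℝ → ℂ) (m : ℤ) :
    fourierCoeffOne (fun x => c * g x) m = c * fourierCoeffOne g m := by
  simp only [fourierCoeffOne, mul_assoc]
  rw [integral_const_mul, mul_smul_comm]

lemma fourierCoeffOne_mul_exp (g : ℝ → ℂ) (k m : ℤ) :
    fourierCoeffOne (fun x => g x * Complex.exp (Complex.I * k * x)) m =
      fourierCoeffOne g (m - k) := by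
  simp only [fourierCoeffOne, mul_assoc, ← Complex.exp_add]
  congr 3 with x
  push_cast
  ring_nf

lemma fourierCoeffOne_eq_fourierCoeffOn (g : ℝ → ℂ) (m : ℤ) :
    fourierCoeffOne g m = fourierCoeffOn Real.two_pi_pos g m := by
  rw [fourierCoeffOn_eq_integral, fourierCoeffOne, circleMeasure,
    integral_Icc_eq_integral_Ioc, intervalIntegral.integral_of_le Real.two_pi_pos.le, sub_zero]
  congr 2 with x
  rw [fourier_coe_apply, smul_eq_mul, mul_comm]
  congr 2
  have : (Real.pi : ℂ) ≠ 0 := by exact_mod_cast Real.pi_ne_zero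
  push_cast
  field_simp

lemma fourierCoeffOne_one (m : ℤ) : fourierCoeffOne (fun _ => 1) m = if m = 0 then 1 else 0 := by
  have : Fact (0 < 2 * Real.pi - 0) := ⟨by simp [Real.pi_pos]⟩
  have lift_one : AddCircle.liftIoc (2 * Real.pi - 0) 0 (fun _ => (1 : ℂ)) = fourier 0 :=
    funext fun _ => fourier_zero.symm
  rw [fourierCoeffOne_eq_fourierCoeffOn, fourierCoeffOn, lift_one, fourierCoeff_fourier,
    Pi.single_apply]

lemma fourierCoeffOne_exp (k m : ℤ) :
    fourierCoeffOne (fun x => Complex.exp (Complex.I * k * x)) m = if m = k then 1 else 0 := by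
  simpa only [one_mul, fourierCoeffOne_one, sub_eq_zero] using
    fourierCoeffOne_mul_exp (fun _ => 1) k m

lemma ae_eq_zero_of_fourierCoeffOne_eq_zero (hg : MemLp g 2 circleMeasure)
    (h0 : ∀ m, fourierCoeffOne g m = 0) : g =ᵐ[circleMeasure] 0 := by
  have hIoc : circleMeasure = volume.restrict (Set.Ioc 0 (2 * Real.pi)) :=
    (Measure.restrict_congr_set Ioc_ae_eq_Icc).symm
  have parseval := tsum_sq_fourierCoeffOn Real.two_pi_pos (hIoc ▸ hg)
  simp only [← fourierCoeffOne_eq_fourierCoeffOn, h0, norm_zero, ne_eq, OfNat.ofNat_ne_zero,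
    not_false_eq_true, zero_pow, tsum_zero, smul_eq_mul,
    intervalIntegral.integral_of_le Real.two_pi_pos.le, ← hIoc] at parseval
  have integral_sq : ∫ x, ‖g x‖ ^ 2 ∂circleMeasure = 0 :=
    (mul_eq_zero.1 parseval.symm).resolve_left (by simp)
  rw [integral_eq_zero_iff_of_nonneg (fun x => by positivity) hg.integrable_norm_pow']
    at integral_sq
  filter_upwards [integral_sq] with x hx
  simpa using hx

lemma norm_fourierCoeffOne_mul_ofReal_le {M : ℝ} (hM : ∀ᵐ x ∂circleMeasure, ‖g x‖ ≤ M)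
    {P : ℝ → ℝ} (hP : Integrable P circleMeasure) (hP0 : ∀ x, 0 ≤ P x)
    (hP1 : fourierCoeffOne (fun x => P x) 0 = 1) (m : ℤ) :
    ‖fourierCoeffOne (fun x => g x * P x) m‖ ≤ M := by
  have mean_one : 1 / (2 * Real.pi) * ∫ x, P x ∂circleMeasure = 1 := by
    simp only [fourierCoeffOne, Int.cast_zero, mul_zero, zero_mul, neg_zero, Complex.exp_zero,
      mul_one, integral_complex_ofReal, Complex.real_smul] at hP1
    exact_mod_cast hP1
  have pointwise : ∀ᵐ x : ℝ ∂circleMeasure,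
      ‖g x * P x * Complex.exp (-(Complex.I * m * x))‖ ≤ M * P x := by
    filter_upwards [hM] with x hx
    rw [norm_mul, norm_mul, norm_exp_neg_I_mul_intCast_mul_ofReal, mul_one, Complex.norm_real,
      Real.norm_of_nonneg (hP0 x)]
    exact mul_le_mul_of_nonneg_right hx (hP0 x)
  calc ‖fourierCoeffOne (fun x => g x * P x) m‖
      ≤ 1 / (2 * Real.pi) * ∫ x, M * P x ∂circleMeasure := by
        rw [fourierCoeffOne, norm_smul, Real.norm_of_nonneg (by positivity)]
        gcongr
        exact norm_integral_le_of_norm_le (hP.const_mul M) pointwise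
    _ = M := by rw [integral_const_mul, mul_left_comm, mean_one, mul_one]

end FourierCoefficients

section RieszProducts

/-- The factor `1 + Re (u e^{iqx})` of a Riesz product. -/
noncomputable def rieszFactor (u : ℂ) (q : ℤ) (x : ℝ) : ℝ :=
  1 + (u * Complex.exp (Complex.I * q * x)).re

/-- The Riesz product `∏_{j<N} (1 + Re (u_j e^{i q_j x}))`, the test function that detects the
Fourier coefficients at the frequencies `±q_j`. -/
noncomputable def rieszProd (u : ℕ → ℂ) (q : ℕ → ℤ) (N : ℕ) (x : ℝ) : ℝ :=
  ∏ j ∈ Finset.range N, rieszFactor (u j) (q j) x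

/-- Every term of `q` exceeds the sum of the preceding ones; these are the frequencies for which
Riesz products are formed. -/
def Superincreasing (q : ℕ → ℤ) : Prop :=
  ∀ n, ∑ j ∈ Finset.range n, q j < q n

/-- The spectrum `c` contains neither `0` nor, apart from `±q n` itself, any frequency that a Riesz
product of the preceding terms of `q` can shift onto `±q n`. -/
def IsolatesSpectrum (q : ℕ → ℤ) (c : ℤ → ℂ) : Prop :=
  c 0 = 0 ∧ ∀ n k, |k| ≠ q n → |(|k| - q n)| ≤ ∑ j ∈ Finset.range n, q j → c k = 0

lemma Superincreasing.sum_nonneg {q : ℕ → ℤ} (hq : Superincreasing q) (n : ℕ) :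
    0 ≤ ∑ j ∈ Finset.range n, q j := by
  induction n with
  | zero => simp
  | succ n ih => rw [Finset.sum_range_succ]; linarith [hq n]

variable {g : ℝ → ℂ} {u : ℕ → ℂ} {q : ℕ → ℤ}

lemma rieszFactor_nonneg {v : ℂ} (hv : ‖v‖ ≤ 1) (k : ℤ) (x : ℝ) : 0 ≤ rieszFactor v k x := by
  have h := Complex.abs_re_le_norm (v * Complex.exp (Complex.I * k * x))
  rw [norm_mul, norm_exp_I_mul_intCast_mul_ofReal, mul_one] at h
  unfold rieszFactor
  linarith [(abs_le.1 (h.trans hv)).1]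

lemma rieszProd_nonneg (hu : ∀ j, ‖u j‖ ≤ 1) (q : ℕ → ℤ) (N : ℕ) (x : ℝ) :
    0 ≤ rieszProd u q N x :=
  Finset.prod_nonneg fun j _ => rieszFactor_nonneg (hu j) _ x

lemma continuous_rieszProd (u : ℕ → ℂ) (q : ℕ → ℤ) (N : ℕ) : Continuous (rieszProd u q N) := by
  unfold rieszProd rieszFactor
  fun_prop

lemma integrable_mul_rieszProd (hg : Integrable g circleMeasure) (u : ℕ → ℂ) (q : ℕ → ℤ) (N : ℕ) :
    Integrable (fun x => g x * (rieszProd u q N x : ℂ)) circleMeasure :=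
  integrable_mul_continuous hg (Complex.continuous_ofReal.comp (continuous_rieszProd u q N))

lemma ofReal_rieszFactor (v : ℂ) (k : ℤ) (x : ℝ) :
    (rieszFactor v k x : ℂ) = 1 + v / 2 * Complex.exp (Complex.I * k * x) +
      star v / 2 * Complex.exp (Complex.I * (-k : ℤ) * x) := by
  rw [rieszFactor, Complex.ofReal_add, Complex.re_eq_add_conj, map_mul, ← Complex.exp_conj]
  simp only [map_mul, Complex.conj_I, Complex.conj_ofReal, map_intCast, Complex.star_def]
  push_cast
  ring_nf

lemma fourierCoeffOne_mul_rieszFactor (hg : Integrable g circleMeasure) (v : ℂ) (k m : ℤ) :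
    fourierCoeffOne (fun x => g x * (rieszFactor v k x : ℂ)) m =
      fourierCoeffOne g m + v / 2 * fourierCoeffOne g (m - k) +
        star v / 2 * fourierCoeffOne g (m + k) := by
  have shifted (w : ℂ) (l : ℤ) :
      Integrable (fun x : ℝ => w * (g x * Complex.exp (Complex.I * l * x))) circleMeasure :=
    (integrable_mul_continuous hg (by fun_prop)).const_mul w
  have expand (x : ℝ) : g x * (rieszFactor v k x : ℂ) =
      g x + v / 2 * (g x * Complex.exp (Complex.I * k * x)) +
        star v / 2 * (g x * Complex.exp (Complex.I * (-k : ℤ) * x)) := by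
    rw [ofReal_rieszFactor]; ring
  simp only [expand]
  rw [fourierCoeffOne_add (hg.fun_add (shifted _ _)) (shifted _ _),
    fourierCoeffOne_add hg (shifted _ _), fourierCoeffOne_const_mul, fourierCoeffOne_const_mul,
    fourierCoeffOne_mul_exp, fourierCoeffOne_mul_exp, sub_neg_eq_add]

lemma fourierCoeffOne_mul_rieszProd_succ (hg : Integrable g circleMeasure) (u : ℕ → ℂ)
    (q : ℕ → ℤ) (N : ℕ) (m : ℤ) :
    fourierCoeffOne (fun x => g x * (rieszProd u q (N + 1) x : ℂ)) m =
      fourierCoeffOne (fun x => g x * (rieszProd u q N x : ℂ)) m +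
        u N / 2 * fourierCoeffOne (fun x => g x * (rieszProd u q N x : ℂ)) (m - q N) +
        star (u N) / 2 * fourierCoeffOne (fun x => g x * (rieszProd u q N x : ℂ)) (m + q N) := by
  rw [← fourierCoeffOne_mul_rieszFactor (integrable_mul_rieszProd hg u q N)]
  simp only [rieszProd, Finset.prod_range_succ, Complex.ofReal_mul, mul_assoc]

lemma fourierCoeffOne_mul_rieszProd_of_isolated (hg : Integrable g circleMeasure)
    (hq : Superincreasing q) (u : ℕ → ℂ) (N : ℕ) (m : ℤ)
    (hm : ∀ k, k ≠ m → |k - m| ≤ ∑ j ∈ Finset.range N, q j → fourierCoeffOne g k = 0) :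
    fourierCoeffOne (fun x => g x * (rieszProd u q N x : ℂ)) m = fourierCoeffOne g m := by
  induction N generalizing m with
  | zero => simp [rieszProd]
  | succ N ih =>
    have hqN := hq N
    have hsum := hq.sum_nonneg N
    rw [Finset.sum_range_succ] at hm
    have shifted (l : ℤ) (hl : |l| = q N) :
        fourierCoeffOne (fun x => g x * (rieszProd u q N x : ℂ)) (m + l) = 0 := by
      rw [ih (m + l) fun k _ hk => hm k (by grind) (by grind)]
      exact hm _ (by grind) (by grind)
    rw [fourierCoeffOne_mul_rieszProd_succ hg, ih m fun k hk hk' => hm k hk (by linarith),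
      sub_eq_add_neg, shifted (-q N) (by grind), shifted (q N) (by grind)]
    ring

lemma fourierCoeffOne_rieszProd_zero (hq : Superincreasing q) (u : ℕ → ℂ) (N : ℕ) :
    fourierCoeffOne (fun x => (rieszProd u q N x : ℂ)) 0 = 1 := by
  have := fourierCoeffOne_mul_rieszProd_of_isolated (g := fun _ => 1) (integrable_const _) hq u N 0
    fun k hk _ => by rw [fourierCoeffOne_one, if_neg hk]
  simpa only [one_mul, fourierCoeffOne_one, if_true] using this

lemma fourierCoeffOne_mul_rieszProd_zero (hg : Integrable g circleMeasure)
    (hq : Superincreasing q) (hgap : IsolatesSpectrum q (fourierCoeffOne g)) (u : ℕ → ℂ)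
    (N : ℕ) :
    fourierCoeffOne (fun x => g x * (rieszProd u q N x : ℂ)) 0 =
      ∑ j ∈ Finset.range N, (u j / 2 * fourierCoeffOne g (-q j) +
        star (u j) / 2 * fourierCoeffOne g (q j)) := by
  induction N with
  | zero => simpa [rieszProd] using hgap.1
  | succ N ih =>
    have hqN := hq N
    have hsum := hq.sum_nonneg N
    have isolated (m : ℤ) (hm : |m| = q N) :
        fourierCoeffOne (fun x => g x * (rieszProd u q N x : ℂ)) m = fourierCoeffOne g m :=
      fourierCoeffOne_mul_rieszProd_of_isolated hg hq u N m fun k hk hk' =>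
        hgap.2 N k (by grind) (by grind)
    rw [fourierCoeffOne_mul_rieszProd_succ hg, ih, zero_sub, zero_add,
      isolated (-q N) (by grind), isolated (q N) (by grind), Finset.sum_range_succ, add_assoc]

end RieszProducts

section Sidon

variable {g : ℝ → ℂ} {q : ℕ → ℤ}

lemma sum_norm_fourierCoeffOne_neg_add_star_le (hg : Integrable g circleMeasure) {M : ℝ}
    (hM : ∀ᵐ x ∂circleMeasure, ‖g x‖ ≤ M) (hq : Superincreasing q)
    (hgap : IsolatesSpectrum q (fourierCoeffOne g)) (N : ℕ) :
    ∑ j ∈ Finset.range N, ‖fourierCoeffOne g (-q j) + star (fourierCoeffOne g (q j))‖ ≤ 2 * M := by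
  choose u norm_u hu using fun j => Complex.exists_norm_eq_mul_self
    (fourierCoeffOne g (-q j) + star (fourierCoeffOne g (q j)))
  have re_term (j : ℕ) : (u j / 2 * fourierCoeffOne g (-q j) +
      star (u j) / 2 * fourierCoeffOne g (q j)).re =
      ‖fourierCoeffOne g (-q j) + star (fourierCoeffOne g (q j))‖ / 2 := by
    have := congrArg Complex.re (hu j)
    simp only [Complex.ofReal_re, Complex.mul_re, Complex.add_re, Complex.add_im,
      Complex.star_def, Complex.conj_re, Complex.conj_im, Complex.div_ofNat_re,
      Complex.div_ofNat_im] at this ⊢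
    linarith
  have bound := norm_fourierCoeffOne_mul_ofReal_le hM
    ((continuous_rieszProd u q N).integrableOn_Icc) (rieszProd_nonneg (fun j => (norm_u j).le) q N)
    (fourierCoeffOne_rieszProd_zero hq u N) 0
  rw [fourierCoeffOne_mul_rieszProd_zero hg hq hgap] at bound
  have re_bound := (Complex.re_le_norm _).trans bound
  simp only [Complex.re_sum, re_term, ← Finset.sum_div] at re_bound
  linarith

lemma norm_add_norm_le_norm_add_star_add (a b : ℂ) :
    ‖a‖ + ‖b‖ ≤ ‖b + star a‖ + ‖Complex.I * b + star (Complex.I * a)‖ := by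
  have polar : ‖Complex.I * b + star (Complex.I * a)‖ = ‖b - star a‖ := by
    have : Complex.I * b + star (Complex.I * a) = Complex.I * (b - star a) := by simp; ring
    rw [this, norm_mul, Complex.norm_I, one_mul]
  have norm_b : 2 * ‖b‖ ≤ ‖b + star a‖ + ‖b - star a‖ := by
    simpa [← two_mul] using norm_add_le (b + star a) (b - star a)
  have norm_a : 2 * ‖a‖ ≤ ‖b + star a‖ + ‖b - star a‖ := by
    simpa [← two_mul] using norm_sub_le (b + star a) (b - star a)
  rw [polar]
  linarith

lemma sum_norm_fourierCoeffOne_add_norm_neg_le (hg : Integrable g circleMeasure) {M : ℝ}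
    (hM : ∀ᵐ x ∂circleMeasure, ‖g x‖ ≤ M) (hq : Superincreasing q)
    (hgap : IsolatesSpectrum q (fourierCoeffOne g)) (N : ℕ) :
    ∑ j ∈ Finset.range N, (‖fourierCoeffOne g (q j)‖ + ‖fourierCoeffOne g (-q j)‖) ≤ 4 * M := by
  have hM' : ∀ᵐ x ∂circleMeasure, ‖Complex.I * g x‖ ≤ M := by simpa using hM
  have hgap' : IsolatesSpectrum q (fourierCoeffOne fun x => Complex.I * g x) := by
    simpa only [IsolatesSpectrum, fourierCoeffOne_const_mul, mul_eq_zero, Complex.I_ne_zero,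
      false_or] using hgap
  have bound := sum_norm_fourierCoeffOne_neg_add_star_le hg hM hq hgap N
  have bound_I :=
    sum_norm_fourierCoeffOne_neg_add_star_le (hg.const_mul Complex.I) hM' hq hgap' N
  simp only [fourierCoeffOne_const_mul] at bound_I
  calc _ ≤ _ := Finset.sum_le_sum fun j _ => norm_add_norm_le_norm_add_star_add _ _
    _ ≤ 4 * M := by rw [Finset.sum_add_distrib]; linarith

lemma tsum_enorm_fourierCoeffOne_add_enorm_neg_le (hg : AEStronglyMeasurable g circleMeasure)
    (hq : Superincreasing q) (hgap : IsolatesSpectrum q (fourierCoeffOne g)) :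
    ∑' j, (‖fourierCoeffOne g (q j)‖ₑ + ‖fourierCoeffOne g (-q j)‖ₑ) ≤
      4 * eLpNorm g ∞ circleMeasure := by
  by_cases hfin : eLpNorm g ∞ circleMeasure = ∞
  · simp [hfin]
  have hM : ∀ᵐ x ∂circleMeasure, ‖g x‖ ≤ (eLpNorm g ∞ circleMeasure).toReal := by
    rw [eLpNorm_exponent_top] at hfin ⊢
    filter_upwards [ae_le_eLpNormEssSup (f := g) (μ := circleMeasure)] with x hx
    simpa using ENNReal.toReal_mono hfin hx
  refine ENNReal.tsum_le_of_sum_range_le fun N => ?_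
  have bound := ENNReal.ofReal_le_ofReal
    (sum_norm_fourierCoeffOne_add_norm_neg_le (.of_bound hg _ hM) hM hq hgap N)
  rw [ENNReal.ofReal_sum_of_nonneg fun _ _ => by positivity, ENNReal.ofReal_mul zero_le_four,
    ENNReal.ofReal_toReal hfin, ENNReal.ofReal_ofNat] at bound
  simpa only [ENNReal.ofReal_add (norm_nonneg _) (norm_nonneg _), ofReal_norm] using bound

end Sidon

section LacunarySpectra

/-- The spectrum `c` is lacunary: it lives on the frequencies `±2^j`. By definition
`LacunaryFourier f` says this of the Fourier coefficients of `f`. -/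
def LacunarySupport {E : Type*} [Zero E] (c : ℤ → E) : Prop :=
  ∀ m : ℤ, (∀ j : ℕ, m.natAbs ≠ 2 ^ j) → c m = 0

/-- The total size of the coefficients of `c` at the frequencies `±2^j`. -/
noncomputable def dyadicAmplitude (c : ℤ → ℂ) (j : ℕ) : ℝ≥0∞ :=
  ‖c (2 ^ j)‖ₑ + ‖c (-2 ^ j)‖ₑ

lemma LacunarySupport.tsum_eq {F : ℤ → ℝ≥0∞} (hF : LacunarySupport F) :
    ∑' m, F m = ∑' j : ℕ, (F (2 ^ j) + F (-2 ^ j)) := by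
  have pow_injective : Function.Injective fun j : ℕ => (2 : ℤ) ^ j :=
    Int.pow_right_injective (by norm_num)
  have injective : Function.Injective
      (Sum.elim (fun j : ℕ => (2 : ℤ) ^ j) (fun j : ℕ => -(2 : ℤ) ^ j)) := by
    refine pow_injective.sumElim (neg_injective.comp pow_injective) fun a b h => ?_
    linarith [pow_pos (zero_lt_two (α := ℤ)) a, pow_pos (zero_lt_two (α := ℤ)) b]
  rw [← injective.tsum_eq, ENNReal.summable.tsum_sum ENNReal.summable, ENNReal.tsum_add]
  · simp
  · intro m hm
    by_contra not_mem
    refine hm (hF m fun j hj => not_mem ?_)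
    rcases Int.natAbs_eq m with h | h
    · exact ⟨.inl j, by rw [h, hj]; simp⟩
    · exact ⟨.inr j, by rw [h, hj]; simp⟩

lemma three_mul_sum_two_pow_add (i n : ℕ) :
    3 * ∑ j ∈ Finset.range n, (2 : ℤ) ^ (i + 2 * j) = 2 ^ (i + 2 * n) - 2 ^ i := by
  induction n with
  | zero => simp
  | succ n ih => rw [Finset.sum_range_succ, mul_add, ih]; ring

lemma superincreasing_two_pow_add (i : ℕ) : Superincreasing fun j => 2 ^ (i + 2 * j) := fun n => by
  have sum := three_mul_sum_two_pow_add i n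
  have : (0 : ℤ) < 2 ^ i := by positivity
  have : (0 : ℤ) < 2 ^ (i + 2 * n) := by positivity
  linarith

lemma two_pow_le_two_mul_abs_sub {l L : ℕ} (h : l ≠ L) : (2 : ℤ) ^ L ≤ 2 * |2 ^ l - 2 ^ L| := by
  have : (0 : ℤ) < 2 ^ L := by positivity
  rcases h.lt_or_gt with h | h <;>
    grind [pow_le_pow_right₀ (one_le_two (α := ℤ)) (Nat.succ_le_of_lt h)]

lemma LacunarySupport.isolatesSpectrum {c : ℤ → ℂ} (hc : LacunarySupport c) (i : ℕ) :
    IsolatesSpectrum (fun j => 2 ^ (i + 2 * j)) c := by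
  refine ⟨hc 0 fun j => (pow_pos two_pos j).ne, fun n k hk hle => hc k fun l hl => ?_⟩
  have abs_k : |k| = 2 ^ l := by rw [Int.abs_eq_natAbs, hl]; push_cast; rfl
  rw [abs_k] at hk hle
  have gap := two_pow_le_two_mul_abs_sub fun h : l = i + 2 * n => hk (by rw [h])
  have sum := three_mul_sum_two_pow_add i n
  have : (0 : ℤ) < 2 ^ i := by positivity
  have : (0 : ℤ) < 2 ^ (i + 2 * n) := by positivity
  linarith

lemma tsum_dyadicAmplitude_fourierCoeffOne_le {g : ℝ → ℂ}
    (hg : AEStronglyMeasurable g circleMeasure) (hlac : LacunaryFourier g) :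
    ∑' j, dyadicAmplitude (fourierCoeffOne g) j ≤ 8 * eLpNorm g ∞ circleMeasure := by
  have sidon (i : ℕ) : ∑' j, dyadicAmplitude (fourierCoeffOne g) (i + 2 * j) ≤
      4 * eLpNorm g ∞ circleMeasure :=
    tsum_enorm_fourierCoeffOne_add_enorm_neg_le hg (superincreasing_two_pow_add i)
      (LacunarySupport.isolatesSpectrum hlac i)
  calc ∑' j, dyadicAmplitude (fourierCoeffOne g) j
      = ∑' j, dyadicAmplitude (fourierCoeffOne g) (0 + 2 * j) +
          ∑' j, dyadicAmplitude (fourierCoeffOne g) (1 + 2 * j) := by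
        simp only [zero_add, add_comm 1]
        exact (tsum_even_add_odd ENNReal.summable ENNReal.summable).symm
    _ ≤ 4 * eLpNorm g ∞ circleMeasure + 4 * eLpNorm g ∞ circleMeasure :=
        add_le_add (sidon 0) (sidon 1)
    _ = 8 * eLpNorm g ∞ circleMeasure := by rw [← add_mul]; norm_num

end LacunarySpectra

section TrigSeries

/-- The trigonometric series `∑ c_m e^{imx}`. -/
noncomputable def trigSeries (c : ℤ → ℂ) (x : ℝ) : ℂ :=
  ∑' m : ℤ, c m * Complex.exp (Complex.I * m * x)

variable {c : ℤ → ℂ}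

lemma continuous_trigSeries (hc : Summable fun m => ‖c m‖) : Continuous (trigSeries c) := by
  refine continuous_tsum (fun m => by fun_prop) hc fun m x => ?_
  rw [norm_mul, norm_exp_I_mul_intCast_mul_ofReal, mul_one]

lemma periodic2PiOne_trigSeries (c : ℤ → ℂ) : Periodic2PiOne (trigSeries c) := by
  intro x
  unfold trigSeries
  congr 1 with m
  congr 1
  exact Complex.exp_eq_exp_iff_exists_int.2 ⟨m, by push_cast; ring⟩

lemma eLpNorm_trigSeries_le (c : ℤ → ℂ) :
    eLpNorm (trigSeries c) ∞ circleMeasure ≤ ∑' m, ‖c m‖ₑ := by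
  rw [eLpNorm_exponent_top]
  refine eLpNormEssSup_le_of_ae_enorm_bound (.of_forall fun x => ?_)
  refine enorm_tsum_le_tsum_enorm.trans_eq (tsum_congr fun m => ?_)
  rw [enorm_mul, ← ofReal_norm (Complex.exp _), norm_exp_I_mul_intCast_mul_ofReal,
    ENNReal.ofReal_one, mul_one]

lemma fourierCoeffOne_trigSeries (hc : Summable fun m => ‖c m‖) (m : ℤ) :
    fourierCoeffOne (trigSeries c) m = c m := by
  have integrable_term (k : ℤ) : Integrable (fun x : ℝ => c k * Complex.exp (Complex.I * k * x) *
      Complex.exp (-(Complex.I * m * x))) circleMeasure :=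
    integrable_mul_exp_neg (Continuous.integrableOn_Icc (by fun_prop)) m
  have norm_term (k : ℤ) (x : ℝ) : ‖c k * Complex.exp (Complex.I * k * x) *
      Complex.exp (-(Complex.I * m * x))‖ = ‖c k‖ := by
    rw [norm_mul, norm_mul, norm_exp_neg_I_mul_intCast_mul_ofReal,
      norm_exp_I_mul_intCast_mul_ofReal, mul_one, mul_one]
  have summable_integral : Summable fun k => ∫ x : ℝ, ‖c k * Complex.exp (Complex.I * k * x) *
      Complex.exp (-(Complex.I * m * x))‖ ∂circleMeasure := by
    simpa only [norm_term, integral_const, smul_eq_mul] using hc.mul_left _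
  calc fourierCoeffOne (trigSeries c) m
      = ∑' k, fourierCoeffOne (fun x => c k * Complex.exp (Complex.I * k * x)) m := by
        simp only [fourierCoeffOne, trigSeries, ← tsum_mul_right]
        rw [← integral_tsum_of_summable_integral_norm integrable_term summable_integral,
          tsum_const_smul'']
    _ = ∑' k, if k = m then c k else 0 := by
        simp only [fourierCoeffOne_const_mul, fourierCoeffOne_exp, mul_ite, mul_one, mul_zero,
          eq_comm (a := m)]
    _ = c m := tsum_ite_eq m c

lemma memLp_trigSeries (hc : Summable fun m => ‖c m‖) :
    MemLp (trigSeries c) ∞ circleMeasure :=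
  ⟨(continuous_trigSeries hc).aestronglyMeasurable, (eLpNorm_trigSeries_le c).trans_lt
    (tsum_enorm_ne_top_iff_summable_norm.2 hc).lt_top⟩

lemma ae_of_periodic {p : ℝ → Prop} (hp : Function.Periodic p (2 * Real.pi))
    (h : ∀ᵐ x ∂circleMeasure, p x) : ∀ᵐ x, p x := by
  rw [circleMeasure, ae_restrict_iff' measurableSet_Icc] at h
  have translates : ∀ᵐ x : ℝ, ∀ k : ℤ, x + k • (2 * Real.pi) ∈ Set.Icc 0 (2 * Real.pi) →
      p (x + k • (2 * Real.pi)) :=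
    ae_all_iff.2 fun k => (measurePreserving_add_right volume _).quasiMeasurePreserving.ae h
  filter_upwards [translates] with x hx
  obtain ⟨k, hk, -⟩ := existsUnique_add_zsmul_mem_Ico Real.two_pi_pos x 0
  rw [zero_add] at hk
  simpa only [hp.zsmul k x] using hx k ⟨hk.1, hk.2.le⟩

lemma ae_eq_trigSeries_fourierCoeffOne {f : ℝ → ℂ} (hper : Periodic2PiOne f)
    (hf : MemLp f 2 circleMeasure) (hs : Summable fun m => ‖fourierCoeffOne f m‖) :
    ∀ᵐ x, f x = trigSeries (fourierCoeffOne f) x := by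
  have hF : MemLp (trigSeries (fourierCoeffOne f)) 2 circleMeasure :=
    (memLp_trigSeries hs).mono_exponent le_top
  have coeff_sub (m : ℤ) : fourierCoeffOne (fun x => f x + -1 * trigSeries (fourierCoeffOne f) x) m
      = 0 := by
    rw [fourierCoeffOne_add (hf.integrable one_le_two) ((hF.integrable one_le_two).const_mul _),
      fourierCoeffOne_const_mul, fourierCoeffOne_trigSeries hs]
    ring
  have ae_circle := ae_eq_zero_of_fourierCoeffOne_eq_zero (hf.add (hF.const_mul _)) coeff_sub
  refine ae_of_periodic (fun x => ?_) ?_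
  · rw [hper, periodic2PiOne_trigSeries]
  · filter_upwards [ae_circle] with x hx
    simpa [← sub_eq_add_neg, sub_eq_zero] using hx

end TrigSeries

section Multipliers

variable {c μ : ℤ → ℂ} {w : ℕ → ℝ≥0∞}

lemma LacunarySupport.tsum_enorm_eq (hc : LacunarySupport c) :
    ∑' m, ‖c m‖ₑ = ∑' j, dyadicAmplitude c j :=
  LacunarySupport.tsum_eq fun m hm => by rw [hc m hm, enorm_zero]

lemma dyadicAmplitude_mul (hw : ∀ m j, m.natAbs = 2 ^ j → ‖μ m‖ₑ = w j) (c : ℤ → ℂ) (j : ℕ) :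
    dyadicAmplitude (fun m => μ m * c m) j = w j * dyadicAmplitude c j := by
  rw [dyadicAmplitude, dyadicAmplitude, enorm_mul, enorm_mul, hw _ j (by simp [Int.natAbs_pow]),
    hw _ j (by simp [Int.natAbs_pow]), mul_add]

lemma LacunarySupport.mul_left (hc : LacunarySupport c) (μ : ℤ → ℂ) :
    LacunarySupport fun m => μ m * c m :=
  fun m hm => by simp only [hc m hm, mul_zero]

lemma eLpNorm_trigSeries_mul_le (hc : LacunarySupport c)
    (hw : ∀ m j, m.natAbs = 2 ^ j → ‖μ m‖ₑ = w j) :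
    eLpNorm (trigSeries fun m => μ m * c m) ∞ circleMeasure ≤
      ∑' j, w j * dyadicAmplitude c j := by
  simpa only [(hc.mul_left μ).tsum_enorm_eq, dyadicAmplitude_mul hw] using
    eLpNorm_trigSeries_le fun m => μ m * c m

lemma summable_norm_mul (hc : LacunarySupport c) (hs : Summable fun m => ‖c m‖)
    (hw : ∀ m j, m.natAbs = 2 ^ j → ‖μ m‖ₑ = w j) {K : ℝ≥0∞} (hK : K ≠ ∞) (hwK : ∀ j, w j ≤ K) :
    Summable fun m => ‖μ m * c m‖ := by
  rw [← tsum_enorm_ne_top_iff_summable_norm] at hs ⊢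
  refine ne_top_of_le_ne_top (ENNReal.mul_ne_top hK hs) ?_
  rw [(hc.mul_left μ).tsum_enorm_eq, hc.tsum_enorm_eq, ← ENNReal.tsum_mul_left]
  refine ENNReal.tsum_le_tsum fun j => ?_
  rw [dyadicAmplitude_mul hw]
  exact mul_le_mul_left (hwK j) _

lemma tsum_mul_dyadicAmplitude_le (hc : LacunarySupport c) (hs : Summable fun m => ‖c m‖)
    (hw : ∀ m j, m.natAbs = 2 ^ j → ‖μ m‖ₑ = w j) {K : ℝ≥0∞} (hK : K ≠ ∞) (hwK : ∀ j, w j ≤ K) :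
    ∑' j, w j * dyadicAmplitude c j ≤
      8 * eLpNorm (trigSeries fun m => μ m * c m) ∞ circleMeasure := by
  have coeff := fourierCoeffOne_trigSeries (summable_norm_mul hc hs hw hK hwK)
  have hlac : LacunaryFourier (trigSeries fun m => μ m * c m) := fun m hm =>
    (coeff m).trans (hc.mul_left μ m hm)
  have sidon := tsum_dyadicAmplitude_fourierCoeffOne_le
    (continuous_trigSeries (summable_norm_mul hc hs hw hK hwK)).aestronglyMeasurable hlac
  simpa only [funext coeff, dyadicAmplitude_mul hw] using sidon

lemma summable_norm_fourierCoeffOne {f : ℝ → ℂ} (hf : MemLp f ∞ circleMeasure)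
    (hlac : LacunaryFourier f) : Summable fun m => ‖fourierCoeffOne f m‖ := by
  rw [← tsum_enorm_ne_top_iff_summable_norm, LacunarySupport.tsum_enorm_eq hlac]
  exact ne_top_of_le_ne_top (ENNReal.mul_ne_top (by simp) hf.2.ne)
    (tsum_dyadicAmplitude_fourierCoeffOne_le hf.1 hlac)

end Multipliers

section BinomialSeries

variable {α : ℝ}

lemma gBinom_eq_choose (α : ℝ) (n : ℕ) : gBinom α n = Ring.choose α n := by
  rw [Ring.choose_eq_smul]
  induction n with
  | zero => simp [gBinom]
  | succ n ih =>
    rw [gBinom, ih, descPochhammer_succ_right, Nat.factorial_succ]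
    simp only [Polynomial.smeval_mul, Polynomial.smeval_sub, Polynomial.smeval_X,
      Polynomial.smeval_natCast, smul_eq_mul, pow_one, pow_zero, nsmul_eq_mul, mul_one]
    have : (n.factorial : ℝ) ≠ 0 := by positivity
    push_cast
    field_simp

lemma mul_abs_gBinom_eq_sub {n : ℕ} (hn : α ≤ n) :
    α * |gBinom α n| = n * |gBinom α n| - (n + 1 : ℕ) * |gBinom α (n + 1)| := by
  have succ_pos : (0 : ℝ) < n + 1 := by positivity
  rw [gBinom, abs_div, abs_mul, abs_of_pos succ_pos, abs_of_nonpos (sub_nonpos.2 hn)]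
  push_cast
  field_simp
  ring

-- For `n ≥ α` the terms telescope, because `α |binom(α,n)|` is a difference of consecutive terms
-- of the nonnegative sequence `n |binom(α,n)|`.
lemma summable_abs_gBinom (hα : 0 < α) : Summable fun n => |gBinom α n| := by
  obtain ⟨N, hN⟩ := exists_nat_ge α
  have telescope (n : ℕ) : ∑ i ∈ Finset.range n, α * |gBinom α (i + N)| =
      N * |gBinom α N| - (n + N : ℕ) * |gBinom α (n + N)| := by
    induction n with
    | zero => simp
    | succ n ih =>
      have le_add : α ≤ (n + N : ℕ) := hN.trans (by exact_mod_cast Nat.le_add_left N n)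
      rw [Finset.sum_range_succ, ih, mul_abs_gBinom_eq_sub le_add, add_right_comm n 1 N]
      ring
  rw [← summable_nat_add_iff N, ← summable_mul_left_iff hα.ne']
  refine summable_of_sum_range_le (c := N * |gBinom α N|) (fun _ => by positivity) fun n => ?_
  rw [telescope]
  exact sub_le_self _ (by positivity)

lemma tsum_gBinom_mul_pow_of_norm_lt_one (α : ℝ) {z : ℂ} (hz : ‖z‖ < 1) :
    ∑' n : ℕ, (gBinom α n : ℂ) * z ^ n = (1 + z) ^ (α : ℂ) := by
  have hasSum := (Complex.one_add_cpow_hasFPowerSeriesOnBall_zero (a := (α : ℂ))).hasSum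
    (y := z) (by simpa [← ENNReal.ofReal_one, Metric.eball_ofReal] using hz)
  rw [zero_add] at hasSum
  rw [← hasSum.tsum_eq]
  refine tsum_congr fun n => ?_
  simp [binomialSeries, gBinom_eq_choose, Complex.ofReal_choose, mul_comm]

lemma tsum_gBinom_mul_pow (hα : 0 < α) {z : ℂ} (hz : ‖z‖ ≤ 1) :
    ∑' n : ℕ, (gBinom α n : ℂ) * z ^ n = (1 + z) ^ (α : ℂ) := by
  have continuousOn_tsum : ContinuousOn (fun w : ℂ => ∑' n : ℕ, (gBinom α n : ℂ) * w ^ n)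
      (Metric.closedBall 0 1) := by
    refine continuousOn_tsum (fun n => by fun_prop) (summable_abs_gBinom hα) fun n w hw => ?_
    rw [norm_mul, norm_pow, Complex.norm_real, Real.norm_eq_abs]
    exact mul_le_of_le_one_right (abs_nonneg _) (pow_le_one₀ (norm_nonneg _) (by simpa using hw))
  have continuousOn_cpow : ContinuousOn (fun w : ℂ => (1 + w) ^ (α : ℂ))
      (Metric.closedBall 0 1) := fun w hw => by
    have re_nonneg : 0 ≤ (1 + w).re := by
      rw [Complex.add_re, Complex.one_re]
      linarith [(abs_le.1 ((Complex.abs_re_le_norm w).trans (mem_closedBall_zero_iff.1 hw))).1]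
    exact ((Complex.continuousAt_cpow_const_of_re_pos (.inl re_nonneg) (by simpa)).comp
      (continuous_const_add 1).continuousAt).continuousWithinAt
  exact Set.EqOn.of_subset_closure
    (fun w hw => tsum_gBinom_mul_pow_of_norm_lt_one α (mem_ball_zero_iff.1 hw))
    continuousOn_tsum continuousOn_cpow Metric.ball_subset_closedBall
    (closure_ball (0 : ℂ) one_ne_zero).ge (mem_closedBall_zero_iff.2 hz)

end BinomialSeries

section FractionalDifferences

variable {α : ℝ}

/-- The symbol of the fractional difference: `Δ_h^α` multiplies the `m`-th Fourier coefficient by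
`fracSymbol α (m * h)`. -/
noncomputable def fracSymbol (α θ : ℝ) : ℂ :=
  Complex.exp (Complex.I * (α * θ)) * (1 - Complex.exp (-(Complex.I * θ))) ^ (α : ℂ)

lemma tsum_gBinom_mul_exp (hα : 0 < α) (θ : ℝ) :
    ∑' ν : ℕ, ((((-1) ^ ν * gBinom α ν : ℝ) : ℂ) * Complex.exp (Complex.I * ((α - ν) * θ))) =
      fracSymbol α θ := by
  have norm_le : ‖-Complex.exp (-(Complex.I * θ))‖ ≤ 1 := by simp [Complex.norm_exp]
  rw [fracSymbol, sub_eq_add_neg, ← tsum_gBinom_mul_pow hα norm_le, ← tsum_mul_left]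
  refine tsum_congr fun ν => ?_
  have exp_split : Complex.exp (Complex.I * ((α - ν) * θ)) =
      Complex.exp (Complex.I * (α * θ)) * Complex.exp (-(Complex.I * θ)) ^ ν := by
    rw [← Complex.exp_nat_mul, ← Complex.exp_add]
    ring_nf
  rw [exp_split, neg_pow]
  push_cast
  ring

lemma norm_fracSymbol (α θ : ℝ) : ‖fracSymbol α θ‖ = ‖2 * Real.sin (θ / 2)‖ ^ α := by
  have norm_phase : ‖Complex.exp (Complex.I * (α * θ))‖ = 1 := by simp [Complex.norm_exp]
  have norm_base : ‖1 - Complex.exp (-(Complex.I * θ))‖ = ‖2 * Real.sin (θ / 2)‖ := by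
    have := Complex.norm_exp_I_mul_ofReal_sub_one (-θ)
    rw [Complex.ofReal_neg, mul_neg, neg_div, Real.sin_neg, mul_neg, norm_neg] at this
    rw [norm_sub_rev, this]
  rw [fracSymbol, norm_mul, norm_phase, one_mul, Complex.norm_cpow_real, norm_base]

lemma enorm_fracSymbol (hα : 0 ≤ α) (h : ℝ) {m : ℤ} {j : ℕ} (hm : m.natAbs = 2 ^ j) :
    ‖fracSymbol α (m * h)‖ₑ = ‖2 * Real.sin (2 ^ j * h / 2)‖ₑ ^ α := by
  rw [← ofReal_norm, norm_fracSymbol, ← ENNReal.ofReal_rpow_of_nonneg (norm_nonneg _) hα,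
    ofReal_norm]
  rcases Int.natAbs_eq m with h' | h' <;> rw [h', hm] <;> push_cast <;>
    simp only [neg_mul, neg_div, Real.sin_neg, mul_neg, enorm_neg]

lemma fracDiffOne_trigSeries (hα : 0 < α) (h : ℝ) {c : ℤ → ℂ} (hc : Summable fun m => ‖c m‖) :
    fracDiffOne α h (trigSeries c) = trigSeries fun m => fracSymbol α (m * h) * c m := by
  ext x
  have summable : Summable (Function.uncurry fun (ν : ℕ) (m : ℤ) =>
      (((-1) ^ ν * gBinom α ν : ℝ) : ℂ) *
        (c m * Complex.exp (Complex.I * m * (x + (α - ν) * h : ℝ)))) := by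
    refine .of_norm (((summable_abs_gBinom hα).mul_of_nonneg hc (fun _ => abs_nonneg _)
      fun _ => norm_nonneg _).congr fun ⟨ν, m⟩ => ?_)
    rw [Function.uncurry_apply_pair, norm_mul, norm_mul, norm_exp_I_mul_intCast_mul_ofReal,
      mul_one, Complex.norm_real, norm_mul, norm_pow, norm_neg, norm_one, one_pow, one_mul,
      Real.norm_eq_abs]
  simp only [fracDiffOne, trigSeries, Complex.real_smul, ← tsum_mul_left]
  rw [← summable.tsum_comm]
  refine tsum_congr fun m => ?_
  rw [← tsum_gBinom_mul_exp hα, ← tsum_mul_right, ← tsum_mul_right]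
  refine tsum_congr fun ν => ?_
  have exp_split : Complex.exp (Complex.I * m * (x + (α - ν) * h : ℝ)) =
      Complex.exp (Complex.I * ((α - ν) * (m * h : ℝ))) * Complex.exp (Complex.I * m * x) := by
    rw [← Complex.exp_add]
    push_cast
    ring_nf
  rw [exp_split]
  ring

lemma fracDiffOne_congr_ae {f g : ℝ → ℂ} (hfg : ∀ᵐ x, f x = g x) (α h : ℝ) :
    ∀ᵐ x, fracDiffOne α h f x = fracDiffOne α h g x := by
  have translates : ∀ᵐ x, ∀ ν : ℕ, f (x + (α - ν) * h) = g (x + (α - ν) * h) :=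
    ae_all_iff.2 fun ν => (measurePreserving_add_right volume _).quasiMeasurePreserving.ae hfg
  filter_upwards [translates] with x hx
  simp only [fracDiffOne, hx]

lemma fracModSmoothOne_congr_ae {f g : ℝ → ℂ} (hfg : ∀ᵐ x, f x = g x) (α : ℝ) (p : ℝ≥0∞)
    (δ : ℝ) : fracModSmoothOne α p f δ = fracModSmoothOne α p g δ :=
  iSup_congr fun h => eLpNorm_congr_ae (ae_restrict_of_ae (fracDiffOne_congr_ae hfg α h))

end FractionalDifferences

section DyadicSmoothness

/-- The quantity `∑_j min(1, 2^{j-n})^α A_j` in the dyadic amplitudes `A_j` of `c`, to which both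
sides of the theorem are comparable. The minimum is encoded by the truncated subtraction
`n - j`. -/
noncomputable def dyadicSmoothness (α : ℝ) (n : ℕ) (c : ℤ → ℂ) : ℝ≥0∞ :=
  ∑' j, ((2 : ℝ≥0∞) ^ (-α)) ^ (n - j) * dyadicAmplitude c j

lemma two_rpow_neg_pow (α : ℝ) (k : ℕ) :
    ((2 : ℝ≥0∞) ^ (-α)) ^ k = ((2⁻¹ : ℝ≥0∞) ^ k) ^ α := by
  rw [ENNReal.rpow_neg, ← ENNReal.inv_rpow, ← ENNReal.rpow_natCast, ← ENNReal.rpow_natCast,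
    ← ENNReal.rpow_mul, ← ENNReal.rpow_mul, mul_comm]

end DyadicSmoothness

section ModulusOfSmoothness

variable {α : ℝ} {c : ℤ → ℂ}

lemma inv_two_pow_tsub (n j : ℕ) : (2⁻¹ : ℝ) ^ (n - j) = min 1 (2 ^ j / 2 ^ n) := by
  rcases le_total j n with h | h
  · rw [min_eq_right (div_le_one_of_le₀ (pow_le_pow_right₀ one_le_two h) (by positivity)),
      inv_pow, pow_sub₀ _ two_ne_zero h, mul_inv, inv_inv]
    ring
  · rw [Nat.sub_eq_zero_of_le h, pow_zero, min_eq_left]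
    rw [one_le_div (by positivity)]
    exact pow_le_pow_right₀ one_le_two h

lemma enorm_two_mul_sin_le {n : ℕ} {h : ℝ} (hh : |h| ≤ 1 / 2 ^ n) (j : ℕ) :
    ‖2 * Real.sin (2 ^ j * h / 2)‖ₑ ≤ 2 * 2⁻¹ ^ (n - j) := by
  have abs_arg : |2 ^ j * h / 2| ≤ 2 ^ j / 2 ^ n := calc
    |2 ^ j * h / 2| = 2 ^ j * |h| / 2 := by rw [abs_div, abs_mul, abs_two, abs_pow, abs_two]
    _ ≤ 2 ^ j * |h| := half_le_self (by positivity)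
    _ ≤ 2 ^ j * (1 / 2 ^ n) := by gcongr
    _ = 2 ^ j / 2 ^ n := mul_one_div _ _
  have bound : ‖2 * Real.sin (2 ^ j * h / 2)‖ ≤ 2 * 2⁻¹ ^ (n - j) := by
    rw [inv_two_pow_tsub, norm_mul, Real.norm_ofNat, Real.norm_eq_abs]
    gcongr
    exact le_min (Real.abs_sin_le_one _) (Real.abs_sin_le_abs.trans abs_arg)
  rw [← ofReal_norm]
  refine (ENNReal.ofReal_le_ofReal bound).trans_eq ?_
  rw [ENNReal.ofReal_mul zero_le_two, ENNReal.ofReal_pow (by positivity),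
    ENNReal.ofReal_inv_of_pos zero_lt_two, ENNReal.ofReal_ofNat]

lemma sin_two_pow_mul_pi_div_three_sq (i : ℕ) : Real.sin (2 ^ i * (Real.pi / 3)) ^ 2 = 3 / 4 := by
  induction i with
  | zero => rw [pow_zero, one_mul, Real.sin_pi_div_three, div_pow, Real.sq_sqrt] <;> norm_num
  | succ i ih =>
    have double : (2 : ℝ) ^ (i + 1) * (Real.pi / 3) = 2 * (2 ^ i * (Real.pi / 3)) := by ring
    rw [double, Real.sin_two_mul, mul_pow, mul_pow, Real.cos_sq', ih]
    norm_num

-- At the step `π / (6 * 2^n)` the low frequencies are controlled by Jordan's inequality, while from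
-- `2^(n+2)` on the argument of the sine is a dyadic multiple of `π / 3`, never close to `π * ℤ`.
lemma inv_two_pow_tsub_le_norm_two_mul_sin (n j : ℕ) :
    (2⁻¹ : ℝ) ^ (n - j) ≤ 3 * ‖2 * Real.sin (2 ^ j * (Real.pi / (6 * 2 ^ n)) / 2)‖ := by
  rw [inv_two_pow_tsub, Real.norm_eq_abs, abs_mul, abs_two]
  rcases lt_or_ge j (n + 2) with hj | hj
  · have pow_le : (2 : ℝ) ^ j / 2 ^ n ≤ 2 := by
      rw [div_le_iff₀ (by positivity), ← pow_succ']
      exact pow_le_pow_right₀ one_le_two (Nat.le_of_lt_succ hj)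
    have arg : 2 ^ j * (Real.pi / (6 * 2 ^ n)) / 2 = 2 ^ j / 2 ^ n * (Real.pi / 12) := by
      field_simp; norm_num
    have jordan := Real.mul_le_sin (x := 2 ^ j / 2 ^ n * (Real.pi / 12)) (by positivity)
      (by nlinarith [Real.pi_pos])
    have scale : 2 / Real.pi * (2 ^ j / 2 ^ n * (Real.pi / 12)) = 2 ^ j / 2 ^ n / 6 := by
      field_simp; norm_num
    rw [arg]
    linarith [min_le_right 1 ((2 : ℝ) ^ j / 2 ^ n),
      le_abs_self (Real.sin (2 ^ j / 2 ^ n * (Real.pi / 12)))]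
  · obtain ⟨i, rfl⟩ := Nat.exists_eq_add_of_le hj
    have arg : 2 ^ (n + 2 + i) * (Real.pi / (6 * 2 ^ n)) / 2 = 2 ^ i * (Real.pi / 3) := by
      rw [pow_add, pow_add]; field_simp; norm_num
    have half_le : 1 / 2 ≤ |Real.sin (2 ^ i * (Real.pi / 3))| := by
      nlinarith [sin_two_pow_mul_pi_div_three_sq i, sq_abs (Real.sin (2 ^ i * (Real.pi / 3))),
        abs_nonneg (Real.sin (2 ^ i * (Real.pi / 3)))]
    rw [arg]
    linarith [min_le_left 1 ((2 : ℝ) ^ (n + 2 + i) / 2 ^ n)]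

lemma inv_two_pow_tsub_le_enorm_two_mul_sin (n j : ℕ) :
    (2⁻¹ : ℝ≥0∞) ^ (n - j) ≤
      3 * ‖2 * Real.sin (2 ^ j * (Real.pi / (6 * 2 ^ n)) / 2)‖ₑ := by
  have := ENNReal.ofReal_le_ofReal (inv_two_pow_tsub_le_norm_two_mul_sin n j)
  rwa [ENNReal.ofReal_mul zero_le_three, ofReal_norm, ENNReal.ofReal_pow (by positivity),
    ENNReal.ofReal_inv_of_pos zero_lt_two, ENNReal.ofReal_ofNat, ENNReal.ofReal_ofNat] at this

lemma fracModSmoothOne_trigSeries_le (hα : 0 < α) (hc : LacunarySupport c)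
    (hs : Summable fun m => ‖c m‖) (n : ℕ) :
    fracModSmoothOne α ∞ (trigSeries c) (1 / 2 ^ n) ≤ 2 ^ α * dyadicSmoothness α n c := by
  refine iSup_le fun ⟨h, hh⟩ => ?_
  rw [fracDiffOne_trigSeries hα h hs, dyadicSmoothness, ← ENNReal.tsum_mul_left]
  refine (eLpNorm_trigSeries_mul_le hc fun m j => enorm_fracSymbol hα.le h).trans
    (ENNReal.tsum_le_tsum fun j => ?_)
  rw [← mul_assoc, two_rpow_neg_pow, ← ENNReal.mul_rpow_of_nonneg _ _ hα.le]
  gcongr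
  exact enorm_two_mul_sin_le hh j

lemma dyadicSmoothness_le_fracModSmoothOne_trigSeries (hα : 0 < α) (hc : LacunarySupport c)
    (hs : Summable fun m => ‖c m‖) (n : ℕ) :
    dyadicSmoothness α n c ≤ 3 ^ α * (8 * fracModSmoothOne α ∞ (trigSeries c) (1 / 2 ^ n)) := by
  set h : ℝ := Real.pi / (6 * 2 ^ n) with h_def
  have abs_h : |h| ≤ 1 / 2 ^ n := by
    rw [abs_of_pos (by positivity), h_def, div_le_div_iff₀ (by positivity) (by positivity)]
    nlinarith [Real.pi_lt_four, pow_pos (zero_lt_two (α := ℝ)) n]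
  have symbol_le (j : ℕ) : ‖2 * Real.sin (2 ^ j * h / 2)‖ₑ ^ α ≤ 2 ^ α := by
    gcongr
    rw [← ofReal_norm, ← ENNReal.ofReal_ofNat]
    refine ENNReal.ofReal_le_ofReal ?_
    rw [norm_mul, Real.norm_ofNat, Real.norm_eq_abs]
    linarith [Real.abs_sin_le_one (2 ^ j * h / 2)]
  calc dyadicSmoothness α n c
      ≤ ∑' j, 3 ^ α * (‖2 * Real.sin (2 ^ j * h / 2)‖ₑ ^ α * dyadicAmplitude c j) := by
        refine ENNReal.tsum_le_tsum fun j => ?_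
        rw [← mul_assoc, two_rpow_neg_pow, ← ENNReal.mul_rpow_of_nonneg _ _ hα.le]
        gcongr
        exact inv_two_pow_tsub_le_enorm_two_mul_sin n j
    _ ≤ 3 ^ α * (8 * eLpNorm (fracDiffOne α h (trigSeries c)) ∞ circleMeasure) := by
        rw [ENNReal.tsum_mul_left, fracDiffOne_trigSeries hα h hs]
        gcongr
        exact tsum_mul_dyadicAmplitude_le hc hs (fun m j => enorm_fracSymbol hα.le h)
          (by simp) symbol_le
    _ ≤ 3 ^ α * (8 * fracModSmoothOne α ∞ (trigSeries c) (1 / 2 ^ n)) := by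
        gcongr
        exact le_iSup (fun h : {h : ℝ // |h| ≤ 1 / 2 ^ n} =>
          eLpNorm (fracDiffOne α h.1 (trigSeries c)) ∞ circleMeasure) ⟨h, abs_h⟩

end ModulusOfSmoothness

section WeylDerivatives

variable {α : ℝ} {η : ℝ → ℝ}

/-- The Fourier multiplier `(im)^α η(|m|/N)` of the Weyl derivative of the de la Vallée Poussin
mean. The value at `m = 0` is `0`, as `(im)^α` is omitted there. -/
noncomputable def vdpWeylSymbol (η : ℝ → ℝ) (α : ℝ) (N : ℕ) (m : ℤ) : ℂ :=
  (if m = 0 then 0 else (Complex.I * (m : ℂ)) ^ (α : ℂ)) * ((η (|(m : ℝ)| / N) : ℝ) : ℂ)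

lemma vdpWeylOne_eq_trigSeries (η : ℝ → ℝ) (α : ℝ) (N : ℕ) (f : ℝ → ℂ) :
    vdpWeylOne η α N f = trigSeries fun m => vdpWeylSymbol η α N m * fourierCoeffOne f m :=
  rfl

lemma cutoff_two_pow_div_two_pow (hη_one : ∀ ξ, ξ ≤ 1 / 2 → η ξ = 1)
    (hη_zero : ∀ ξ, 1 ≤ ξ → η ξ = 0) (j k : ℕ) :
    η (2 ^ j / 2 ^ k) = if j < k then 1 else 0 := by
  split_ifs with hjk
  · apply hη_one
    rw [div_le_div_iff₀ (by positivity) two_pos, ← pow_succ, one_mul]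
    exact pow_le_pow_right₀ one_le_two hjk
  · apply hη_zero
    rw [one_le_div (by positivity)]
    exact pow_le_pow_right₀ one_le_two (not_lt.1 hjk)

lemma enorm_vdpWeylSymbol (hη_one : ∀ ξ, ξ ≤ 1 / 2 → η ξ = 1)
    (hη_zero : ∀ ξ, 1 ≤ ξ → η ξ = 0) (α : ℝ) (k : ℕ) {m : ℤ} {j : ℕ} (hm : m.natAbs = 2 ^ j) :
    ‖vdpWeylSymbol η α (2 ^ k) m‖ₑ = if j < k then ((2 : ℝ≥0∞) ^ j) ^ α else 0 := by
  have m_ne_zero : m ≠ 0 := Int.natAbs_ne_zero.1 (hm ▸ (pow_pos two_pos j).ne')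
  have abs_m : |(m : ℝ)| = 2 ^ j := by
    rw [← Int.cast_abs, Int.abs_eq_natAbs, hm]; push_cast; rfl
  have enorm_power : ‖(Complex.I * (m : ℂ)) ^ (α : ℂ)‖ₑ = ((2 : ℝ≥0∞) ^ j) ^ α := by
    rw [← ofReal_norm, Complex.norm_cpow_real, norm_mul, Complex.norm_I, one_mul,
      Complex.norm_intCast, abs_m, ← ENNReal.ofReal_rpow_of_pos (by positivity),
      ENNReal.ofReal_pow zero_le_two, ENNReal.ofReal_ofNat]
  rw [vdpWeylSymbol, if_neg m_ne_zero, enorm_mul, enorm_power, abs_m, Nat.cast_pow,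
    Nat.cast_ofNat, cutoff_two_pow_div_two_pow hη_one hη_zero]
  split_ifs <;> simp

lemma two_rpow_neg_natCast_mul_ite (α : ℝ) (j k : ℕ) :
    (2 : ℝ≥0∞) ^ (-(k : ℝ) * α) * (if j < k then ((2 : ℝ≥0∞) ^ j) ^ α else 0) =
      if j < k then ((2 : ℝ≥0∞) ^ (-α)) ^ (k - j) else 0 := by
  split_ifs with hjk
  · rw [← ENNReal.rpow_natCast, ← ENNReal.rpow_natCast, ← ENNReal.rpow_mul, ← ENNReal.rpow_mul,
      ← ENNReal.rpow_add _ _ two_ne_zero ENNReal.ofNat_ne_top, Nat.cast_sub hjk.le]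
    ring_nf
  · exact mul_zero _

variable {r : ℝ≥0∞}

lemma pow_tsub_succ_le_tsum_ite (hr : r ≤ 1) (n j : ℕ) :
    r ^ (n - j + 1) ≤ ∑' k, if j < n + k then r ^ (n + k - j) else 0 := by
  refine le_trans ?_ (ENNReal.le_tsum (j + 1 - n))
  rw [if_pos (by lia)]
  exact pow_le_pow_right_of_le_one' hr (by lia)

lemma tsum_ite_pow_le (r : ℝ≥0∞) (n j : ℕ) :
    ∑' k, (if j < n + k then r ^ (n + k - j) else 0) ≤ (1 - r)⁻¹ * r ^ (n - j) := by
  have head_zero : ∑ k ∈ Finset.range (j - n), (if j < n + k then r ^ (n + k - j) else 0) = 0 :=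
    Finset.sum_eq_zero fun k hk => if_neg (by have := Finset.mem_range.1 hk; lia)
  rw [← ENNReal.summable.sum_add_tsum_nat_add' (k := j - n), head_zero, zero_add,
    ← ENNReal.tsum_geometric, ← ENNReal.tsum_mul_right]
  refine ENNReal.tsum_le_tsum fun l => ?_
  split_ifs with hl
  · rw [← pow_add]
    exact (congrArg (r ^ ·) (by lia)).le
  · exact zero_le

end WeylDerivatives

section WeylSums

variable {α : ℝ} {η : ℝ → ℝ} {f : ℝ → ℂ}

lemma tsum_two_rpow_mul_tsum_ite (α : ℝ) (n : ℕ) (A : ℕ → ℝ≥0∞) :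
    ∑' k : ℕ, (2 : ℝ≥0∞) ^ (-((n + k : ℕ) : ℝ) * α) *
        ∑' j, (if j < n + k then ((2 : ℝ≥0∞) ^ j) ^ α else 0) * A j =
      ∑' j, (∑' k, if j < n + k then ((2 : ℝ≥0∞) ^ (-α)) ^ (n + k - j) else 0) * A j := by
  simp only [← ENNReal.tsum_mul_left, ← ENNReal.tsum_mul_right, ← mul_assoc,
    two_rpow_neg_natCast_mul_ite]
  exact ENNReal.tsum_comm

lemma tsum_eLpNorm_vdpWeylOne_le (hη_one : ∀ ξ, ξ ≤ 1 / 2 → η ξ = 1)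
    (hη_zero : ∀ ξ, 1 ≤ ξ → η ξ = 0) (α : ℝ) (hlac : LacunaryFourier f) (n : ℕ) :
    ∑' k : ℕ, (2 : ℝ≥0∞) ^ (-((n + k : ℕ) : ℝ) * α) *
        eLpNorm (vdpWeylOne η α (2 ^ (n + k)) f) ∞ circleMeasure ≤
      (1 - (2 : ℝ≥0∞) ^ (-α))⁻¹ * dyadicSmoothness α n (fourierCoeffOne f) := by
  calc _ ≤ ∑' k : ℕ, (2 : ℝ≥0∞) ^ (-((n + k : ℕ) : ℝ) * α) *
        ∑' j, (if j < n + k then ((2 : ℝ≥0∞) ^ j) ^ α else 0) *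
          dyadicAmplitude (fourierCoeffOne f) j := by
        gcongr with k
        rw [vdpWeylOne_eq_trigSeries]
        exact eLpNorm_trigSeries_mul_le hlac fun m j => enorm_vdpWeylSymbol hη_one hη_zero α _
    _ ≤ _ := by
        rw [tsum_two_rpow_mul_tsum_ite, dyadicSmoothness, ← ENNReal.tsum_mul_left]
        refine ENNReal.tsum_le_tsum fun j => ?_
        rw [← mul_assoc]
        gcongr
        exact tsum_ite_pow_le _ n j

lemma dyadicSmoothness_le_tsum_eLpNorm_vdpWeylOne (hη_one : ∀ ξ, ξ ≤ 1 / 2 → η ξ = 1)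
    (hη_zero : ∀ ξ, 1 ≤ ξ → η ξ = 0) (hα : 0 < α) (hlac : LacunaryFourier f)
    (hs : Summable fun m => ‖fourierCoeffOne f m‖) (n : ℕ) :
    dyadicSmoothness α n (fourierCoeffOne f) ≤
      2 ^ α * (8 * ∑' k : ℕ, (2 : ℝ≥0∞) ^ (-((n + k : ℕ) : ℝ) * α) *
        eLpNorm (vdpWeylOne η α (2 ^ (n + k)) f) ∞ circleMeasure) := by
  have ratio_le_one : (2 : ℝ≥0∞) ^ (-α) ≤ 1 :=
    ENNReal.rpow_le_one_of_one_le_of_neg one_le_two (neg_lt_zero.2 hα)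
  have cancel : (2 : ℝ≥0∞) ^ α * (2 : ℝ≥0∞) ^ (-α) = 1 := by
    rw [← ENNReal.rpow_add _ _ two_ne_zero ENNReal.ofNat_ne_top, add_neg_cancel, ENNReal.rpow_zero]
  have symbol_le (k j : ℕ) : (if j < k then ((2 : ℝ≥0∞) ^ j) ^ α else 0) ≤ (2 ^ k) ^ α := by
    split_ifs with hjk
    · gcongr; exact one_le_two
    · exact zero_le
  calc dyadicSmoothness α n (fourierCoeffOne f)
      ≤ 2 ^ α * ∑' j, (∑' k, if j < n + k then ((2 : ℝ≥0∞) ^ (-α)) ^ (n + k - j) else 0) *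
          dyadicAmplitude (fourierCoeffOne f) j := by
        rw [dyadicSmoothness, ← ENNReal.tsum_mul_left]
        refine ENNReal.tsum_le_tsum fun j => ?_
        rw [← mul_assoc]
        gcongr
        calc _ = 2 ^ α * ((2 : ℝ≥0∞) ^ (-α)) ^ (n - j + 1) := by
              rw [pow_succ', ← mul_assoc, cancel, one_mul]
          _ ≤ _ := by gcongr; exact pow_tsub_succ_le_tsum_ite ratio_le_one n j
    _ ≤ _ := by
        rw [← tsum_two_rpow_mul_tsum_ite, ← ENNReal.tsum_mul_left (a := 8)]
        refine mul_le_mul_right (ENNReal.tsum_le_tsum fun k => ?_) _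
        rw [mul_left_comm, vdpWeylOne_eq_trigSeries]
        gcongr
        exact tsum_mul_dyadicAmplitude_le hlac hs
          (fun m j => enorm_vdpWeylSymbol hη_one hη_zero α (n + k)) (by finiteness)
          (symbol_le (n + k))

end WeylSums

theorem stmt17_general (α : ℝ) (hα : 0 < α) :
    ∃ c C : ℝ≥0∞, 0 < c ∧ C ≠ ∞ ∧
      ∀ η : ℝ → ℝ, (∀ ξ : ℝ, ξ ≤ 1 / 2 → η ξ = 1) → (∀ ξ : ℝ, 1 ≤ ξ → η ξ = 0) →
      ∀ f : ℝ → ℂ, Periodic2PiOne f → AEStronglyMeasurable f circleMeasure →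
        eLpNorm f ∞ circleMeasure ≠ ∞ → LacunaryFourier f → ∀ n : ℕ,
        c * (∑' k : ℕ, (2 : ℝ≥0∞) ^ (-((n + k : ℕ) : ℝ) * α) *
            eLpNorm (vdpWeylOne η α (2 ^ (n + k)) f) ∞ circleMeasure) ≤
          fracModSmoothOne α ∞ f (1 / 2 ^ n) ∧
        fracModSmoothOne α ∞ f (1 / 2 ^ n) ≤
          C * ∑' k : ℕ, (2 : ℝ≥0∞) ^ (-((n + k : ℕ) : ℝ) * α) *
            eLpNorm (vdpWeylOne η α (2 ^ (n + k)) f) ∞ circleMeasure := by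
  have ratio_lt_one : (2 : ℝ≥0∞) ^ (-α) < 1 :=
    ENNReal.rpow_lt_one_of_one_lt_of_neg ENNReal.one_lt_two (neg_lt_zero.2 hα)
  set K : ℝ≥0∞ := (1 - 2 ^ (-α))⁻¹ * (3 ^ α * 8) with K_def
  have K_ne_top : K ≠ ∞ := by
    have := (tsub_pos_of_lt ratio_lt_one).ne'
    finiteness
  refine ⟨K⁻¹, 2 ^ α * (2 ^ α * 8), ENNReal.inv_pos.2 K_ne_top, by finiteness,
    fun η hη_one hη_zero f hper hf hfin hlac n => ?_⟩
  have hs := summable_norm_fourierCoeffOne ⟨hf, hfin.lt_top⟩ hlac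
  rw [fracModSmoothOne_congr_ae (ae_eq_trigSeries_fourierCoeffOne hper
    (MemLp.mono_exponent ⟨hf, hfin.lt_top⟩ le_top) hs)]
  constructor
  · rw [mul_comm, ← div_eq_mul_inv]
    refine ENNReal.div_le_of_le_mul' ((tsum_eLpNorm_vdpWeylOne_le hη_one hη_zero α hlac n).trans ?_)
    rw [K_def, mul_assoc, mul_assoc]
    gcongr
    exact dyadicSmoothness_le_fracModSmoothOne_trigSeries hα hlac hs n
  · rw [mul_assoc, mul_assoc]
    refine (fracModSmoothOne_trigSeries_le hα hlac hs n).trans ?_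
    gcongr
    exact dyadicSmoothness_le_tsum_eLpNorm_vdpWeylOne hη_one hη_zero hα hlac hs n

/-- For `f ∈ L_∞(𝕋)` with lacunary Fourier series and `α > 0`,
`ω_α(f,2^{-n})_∞ ≍ ∑_{k=n}^∞ 2^{-αk} ‖(η_{2^k}f)^{(α)}‖_∞`. -/
theorem stmt17 (η : ℝ → ℝ) (hη_smooth : ContDiffOn ℝ (⊤ : ℕ∞) η (Set.Ici 0))
    (hη_one : ∀ ξ : ℝ, ξ ≤ 1 / 2 → η ξ = 1) (hη_zero : ∀ ξ : ℝ, 1 ≤ ξ → η ξ = 0)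
    (α : ℝ) (hα : 0 < α) :
    ∃ c C : ℝ≥0∞, 0 < c ∧ C ≠ ∞ ∧
      ∀ f : ℝ → ℂ, Periodic2PiOne f →
        AEStronglyMeasurable f circleMeasure →
        eLpNorm f ∞ circleMeasure ≠ ∞ →
        LacunaryFourier f →
        ∀ n : ℕ, 1 ≤ n →
          c * (∑' k : ℕ,
                (2 : ℝ≥0∞) ^ (-((n + k : ℕ) : ℝ) * α) *
                  eLpNorm (vdpWeylOne η α (2 ^ (n + k)) f) ∞ circleMeasure)
            ≤ fracModSmoothOne α ∞ f (1 / 2 ^ n) ∧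
          fracModSmoothOne α ∞ f (1 / 2 ^ n)
            ≤ C * ∑' k : ℕ,
                (2 : ℝ≥0∞) ^ (-((n + k : ℕ) : ℝ) * α) *
                  eLpNorm (vdpWeylOne η α (2 ^ (n + k)) f) ∞ circleMeasure := by
  obtain ⟨c, C, hc, hC, h⟩ := stmt17_general α hα
  exact ⟨c, C, hc, hC, fun f hper hf hfin hlac n _ => h η hη_one hη_zero f hper hf hfin hlac n⟩
end

section
/- Let p = 1 or p = ∞ and α ∈ ℕ. Then for every q > 0 and every constant C > 0 there exist a function f ∈ L_p(𝕋) and an n ∈ ℕ such that (Σ_{k=n+1}^∞ 2^{-qαk}‖(η_{2^k}f)^{(α)}‖_{L_p(𝕋)}^q)^{1/q} > C·ω_α(f, 2^{-n})_{L_p(𝕋)}. In other words, the inequality (Σ_{k=n+1}^∞ 2^{-qαk}‖(η_{2^k}f)^{(α)}‖_{L_p(𝕋)}^q)^{1/q} ≤ C·ω_α(f, 2^{-n})_{L_p(𝕋)} cannot hold with a constant C independent of n and f. -/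
open scoped ENNReal
open MeasureTheory

/-- The de la Vallée Poussin mean `η_N f(x) = ∑_m η(|m|/N) \hat f(m) e^{imx}`. -/
noncomputable def vdpMeanOne (η : ℝ → ℝ) (N : ℕ) (f : ℝ → ℂ) : ℝ → ℂ :=
  fun x => ∑' m : ℤ,
    ((η (|(m : ℝ)| / N) : ℝ) : ℂ) * fourierCoeffOne f m * Complex.exp (Complex.I * m * x)

/-!
Since `ω_α(f, δ)_p ≤ 2^α ‖f‖_p`, it suffices to find, for each `K`, a function `f` of bounded norm
for which `K` of the terms `2^{-kα} ‖(η_{2^k} f)^{(α)}‖_p` exceed a fixed positive constant. In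
other words, Bernstein's inequality should be sharp for `f` at `K` different dyadic scales.

For `p = 1` take a Fejér kernel of high order: its norm is `1`, and its low-frequency coefficients
are at least `1/2`, so testing `(η_N f)^{(α)}` against `e^{-imx}` with `m` comparable to `N` gives
`‖(η_N f)^{(α)}‖_1 ≳ N^α`. For `p = ∞` take the sawtooth, whose coefficients are `-1/(im)`. The
coefficients of `(η_N f)^{(α)}` at `0 < m ≤ N/2` then all have the phase of `-i^{α-1}`, so they add
up without cancellation when tested against a Fejér kernel modulated to frequency comparable to `N`.
-/

open AddCircle (haarAddCircle)
open scoped Real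

section TranslationInvariance

variable {G E : Type*} [AddCommGroup G] [MeasurableSpace G] [MeasurableAdd G] {μ : Measure G}
  [μ.IsAddRightInvariant] [NormedAddCommGroup E] {f : G → E}

lemma aestronglyMeasurable_fwdDiff (hf : AEStronglyMeasurable f μ) (h : G) :
    AEStronglyMeasurable (fwdDiff h f) μ :=
  (hf.comp_measurePreserving (measurePreserving_add_right μ h)).sub hf

lemma aestronglyMeasurable_fwdDiff_iterate (hf : AEStronglyMeasurable f μ) (h : G) (r : ℕ) :
    AEStronglyMeasurable ((fwdDiff h)^[r] f) μ := by
  induction r generalizing f with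
  | zero => exact hf
  | succ _ ih => exact ih (aestronglyMeasurable_fwdDiff hf h)

lemma eLpNorm_fwdDiff_le (hf : AEStronglyMeasurable f μ) {p : ℝ≥0∞} (hp : 1 ≤ p) (h : G) :
    eLpNorm (fwdDiff h f) p μ ≤ 2 * eLpNorm f p μ := by
  have hh := measurePreserving_add_right μ h
  calc eLpNorm (fwdDiff h f) p μ
      ≤ eLpNorm (f ∘ (· + h)) p μ + eLpNorm f p μ :=
        eLpNorm_sub_le (hf.comp_measurePreserving hh) hf hp
    _ = 2 * eLpNorm f p μ := by rw [eLpNorm_comp_measurePreserving hf hh, two_mul]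

lemma eLpNorm_fwdDiff_iterate_le (hf : AEStronglyMeasurable f μ) {p : ℝ≥0∞} (hp : 1 ≤ p) (h : G)
    (r : ℕ) : eLpNorm ((fwdDiff h)^[r] f) p μ ≤ 2 ^ r * eLpNorm f p μ := by
  induction r generalizing f with
  | zero => simp
  | succ r ih =>
    calc eLpNorm ((fwdDiff h)^[r] (fwdDiff h f)) p μ
        ≤ 2 ^ r * eLpNorm (fwdDiff h f) p μ := ih (aestronglyMeasurable_fwdDiff hf h)
      _ ≤ 2 ^ r * (2 * eLpNorm f p μ) := by gcongr; exact eLpNorm_fwdDiff_le hf hp h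
      _ = 2 ^ (r + 1) * eLpNorm f p μ := by rw [pow_succ, mul_assoc]

end TranslationInvariance

section FourierCoefficients

variable {T : ℝ}

lemma norm_fourier_apply (n : ℤ) (x : AddCircle T) : ‖fourier n x‖ = 1 := by
  rw [fourier_apply, Circle.norm_coe]

lemma deriv_iterate_sum_fourier (s : Finset ℤ) (c : ℤ → ℂ) (r : ℕ) :
    deriv^[r] (fun x : ℝ => ∑ n ∈ s, c n * fourier n (x : AddCircle T)) =
      fun x : ℝ =>
        ∑ n ∈ s, (2 * π * Complex.I * n / T) ^ r * c n * fourier n (x : AddCircle T) := by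
  induction r with
  | zero => simp
  | succ r ih =>
    rw [Function.iterate_succ_apply', ih]
    funext x
    refine (HasDerivAt.fun_sum fun n _ => (hasDerivAt_fourier T n x).const_mul _).deriv.trans ?_
    exact Finset.sum_congr rfl fun n _ => by ring

/-- The Fejér kernel of order `M` on the circle of length `T`, normalised to have mean `1` with
respect to `haarAddCircle`; it is `0` for `M = 0`. -/
noncomputable def fejerKernel (T : ℝ) (M : ℕ) : C(AddCircle T, ℂ) :=
  (M : ℂ)⁻¹ • ∑ j ∈ Finset.range M, ∑ l ∈ Finset.range M, fourier (j - l)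

lemma fejerKernel_apply (M : ℕ) (x : AddCircle T) : fejerKernel T M x =
    (M : ℂ)⁻¹ * ∑ j ∈ Finset.range M, ∑ l ∈ Finset.range M, fourier (j - l) x := by
  simp only [fejerKernel, ContinuousMap.smul_apply, ContinuousMap.sum_apply, smul_eq_mul]

lemma fejerKernel_eq_norm_sq (M : ℕ) (x : AddCircle T) : fejerKernel T M x =
    ((M : ℝ)⁻¹ * ‖∑ j ∈ Finset.range M, fourier j x‖ ^ 2 : ℝ) := by
  rw [fejerKernel_apply]
  push_cast
  rw [← Complex.mul_conj', map_sum, Finset.sum_mul_sum]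
  congr! 3 with j - l -
  rw [sub_eq_add_neg, fourier_add, fourier_neg]

lemma ofReal_norm_fejerKernel (M : ℕ) (x : AddCircle T) :
    (‖fejerKernel T M x‖ : ℂ) = fejerKernel T M x := by
  rw [fejerKernel_eq_norm_sq, Complex.norm_of_nonneg (by positivity)]

variable [hT : Fact (0 < T)]

lemma enorm_fourierCoeff_le (f : AddCircle T → ℂ) (n : ℤ) :
    ‖fourierCoeff f n‖ₑ ≤ eLpNorm f 1 haarAddCircle := by
  rw [eLpNorm_one_eq_lintegral_enorm]
  refine (enorm_integral_le_lintegral_enorm _).trans_eq (lintegral_congr fun x => ?_)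
  rw [enorm_smul, ← ofReal_norm (fourier (-n) x), norm_fourier_apply, ENNReal.ofReal_one, one_mul]

lemma fourierCoeff_mul_fourier (f : AddCircle T → ℂ) (k n : ℤ) :
    fourierCoeff (fun x => f x * fourier k x) n = fourierCoeff f (n - k) := by
  refine integral_congr_ae (.of_forall fun x => ?_)
  simp only [smul_eq_mul]
  rw [neg_sub, sub_eq_add_neg, fourier_add]
  ring

lemma fourierCoeff_one (n : ℤ) : fourierCoeff (fun _ : AddCircle T => (1 : ℂ)) n =
    if n = 0 then 1 else 0 := by
  have h : (fun _ : AddCircle T => (1 : ℂ)) = fourier 0 := by ext; simp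
  rw [h, fourierCoeff_fourier, Pi.single_apply]

lemma fourierCoeff_sum_smul_fourier (s : Finset ℤ) (c : ℤ → ℂ) (n : ℤ) :
    fourierCoeff (∑ k ∈ s, c k • fourier k : C(AddCircle T, ℂ)) n = if n ∈ s then c n else 0 := by
  rw [ContinuousMap.coe_sum, fourierCoeff.sum s _ fun k _ =>
    (map_continuous (c k • fourier k)).integrable_of_hasCompactSupport (.of_compactSpace _)]
  simp_rw [Finset.sum_apply, ContinuousMap.coe_smul, fourierCoeff.const_smul, fourierCoeff_fourier]
  simp [Pi.single_apply]

/-- The sawtooth function on the circle of length `T`, equal to `x` for `0 ≤ x < T`. It is bounded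
with Fourier coefficients of order exactly `1 / n`. -/
noncomputable def sawtooth (x : AddCircle T) : ℂ :=
  AddCircle.liftIco T 0 Complex.ofReal x

lemma measurable_sawtooth : Measurable (sawtooth (T := T)) :=
  Complex.measurable_ofReal.comp
    (measurable_subtype_coe.comp (AddCircle.measurableEquivIco T 0).measurable)

lemma norm_sawtooth_le (x : AddCircle T) : ‖sawtooth x‖ ≤ T := by
  obtain ⟨h0, hle⟩ := (AddCircle.equivIco T 0 x).2
  change ‖((AddCircle.equivIco T 0 x : ℝ) : ℂ)‖ ≤ T
  rw [Complex.norm_of_nonneg h0]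
  linarith

lemma fourierCoeff_sawtooth {n : ℤ} (hn : n ≠ 0) :
    fourierCoeff (sawtooth (T := T)) n = -T / (2 * π * Complex.I * n) := by
  have hone : fourierCoeffOn (lt_add_of_pos_right 0 hT.out) (fun _ : ℝ => (1 : ℂ)) n = 0 := by
    rw [← fourierCoeff_liftIco_eq]
    exact (fourierCoeff_one n).trans (if_neg hn)
  refine (fourierCoeff_liftIco_eq _ n).trans ?_
  rw [fourierCoeffOn_of_hasDerivAt (f := Complex.ofReal) _ hn
    (fun x _ => Complex.ofRealCLM.hasDerivAt) intervalIntegrable_const]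
  simp only [Complex.ofRealCLM_apply, Complex.ofReal_one]
  rw [hone, QuotientAddGroup.mk_zero, fourier_eval_zero]
  push_cast
  field_simp
  ring

lemma fourierCoeff_mul_fejerKernel {f : AddCircle T → ℂ} (hf : Integrable f haarAddCircle)
    (M : ℕ) (n : ℤ) : fourierCoeff (fun x => f x * fejerKernel T M x) n =
      (M : ℂ)⁻¹ * ∑ j ∈ Finset.range M, ∑ l ∈ Finset.range M, fourierCoeff f (n - (j - l)) := by
  have hint (k : ℤ) : Integrable (fun x => f x * fourier k x) haarAddCircle := by
    simpa only [smul_eq_mul, mul_comm] using hf.fourier_smul k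
  have hexp : (fun x => f x * fejerKernel T M x) = fun x => (M : ℂ)⁻¹ *
      (∑ j ∈ Finset.range M, ∑ l ∈ Finset.range M, fun x => f x * fourier (j - l) x) x := by
    funext x
    rw [fejerKernel_apply]
    simp only [Finset.sum_apply]
    rw [mul_left_comm, Finset.mul_sum]
    simp only [Finset.mul_sum]
  rw [hexp, fourierCoeff.const_mul,
    fourierCoeff.sum _ _ fun j _ => integrable_finsetSum' _ fun l _ => hint _]
  simp_rw [fun j : ℕ => fourierCoeff.sum (Finset.range M) _ fun l _ => hint (j - l),
    Finset.sum_apply, fourierCoeff_mul_fourier]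

lemma fourierCoeff_fejerKernel {M m : ℕ} (hM : M ≠ 0) (hm : m ≤ M) :
    fourierCoeff (fejerKernel T M) m = (1 - m / M : ℝ) := by
  have hcount : ∑ j ∈ Finset.range M, ∑ l ∈ Finset.range M,
      (if (m : ℤ) - (j - l) = 0 then (1 : ℂ) else 0) = (M - m : ℕ) := by
    have hiff (j l : ℕ) : (m : ℤ) - (j - l) = 0 ↔ j = m + l := by omega
    have hfilter : {l ∈ Finset.range M | m + l < M} = Finset.range (M - m) := by
      ext l
      simp only [Finset.mem_filter, Finset.mem_range]
      omega
    rw [Finset.sum_comm]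
    simp_rw [hiff, Finset.sum_ite_eq', Finset.mem_range, Finset.sum_boole, hfilter,
      Finset.card_range]
  have h := fourierCoeff_mul_fejerKernel (T := T) (integrable_const (1 : ℂ)) M m
  simp_rw [one_mul, fourierCoeff_one] at h
  rw [h, hcount, Nat.cast_sub hm]
  push_cast
  field_simp

lemma eLpNorm_one_fejerKernel {M : ℕ} (hM : M ≠ 0) :
    eLpNorm (fejerKernel T M) 1 haarAddCircle = 1 := by
  have hint : ∫ x, fejerKernel T M x ∂haarAddCircle = 1 := by
    simpa [fourierCoeff] using fourierCoeff_fejerKernel (T := T) hM M.zero_le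
  have hnorm : ∫ x, ‖fejerKernel T M x‖ ∂haarAddCircle = 1 := by
    rw [← integral_congr_ae (.of_forall (ofReal_norm_fejerKernel M)),
      integral_complex_ofReal] at hint
    exact_mod_cast hint
  rw [eLpNorm_one_eq_lintegral_enorm, ← ofReal_integral_norm_eq_lintegral_enorm
    ((map_continuous _).integrable_of_hasCompactSupport (.of_compactSpace _)), hnorm,
    ENNReal.ofReal_one]

lemma enorm_sum_fourierCoeff_le_eLpNorm_top {f : AddCircle T → ℂ}
    (hf : Integrable f haarAddCircle) {M : ℕ} (hM : M ≠ 0) (n : ℤ) :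
    ‖(M : ℂ)⁻¹ * ∑ j ∈ Finset.range M, ∑ l ∈ Finset.range M, fourierCoeff f (n - (j - l))‖ₑ ≤
      eLpNorm f ∞ haarAddCircle := by
  rw [← fourierCoeff_mul_fejerKernel hf]
  calc ‖fourierCoeff (fun x => f x * fejerKernel T M x) n‖ₑ
      ≤ eLpNorm (f • (fejerKernel T M : AddCircle T → ℂ)) 1 haarAddCircle :=
        enorm_fourierCoeff_le _ n
    _ ≤ eLpNorm f ∞ haarAddCircle * eLpNorm (fejerKernel T M) 1 haarAddCircle :=
        eLpNorm_smul_le_eLpNorm_top_mul_eLpNorm 1 (map_continuous _).aestronglyMeasurable f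
    _ = eLpNorm f ∞ haarAddCircle := by rw [eLpNorm_one_fejerKernel hM, mul_one]

end FourierCoefficients

section TwoPi

local instance fact_zero_lt_two_pi : Fact (0 < 2 * π) := ⟨Real.two_pi_pos⟩

lemma exp_I_mul_eq_fourier (m : ℤ) (x : ℝ) :
    Complex.exp (Complex.I * m * x) = fourier m (x : AddCircle (2 * π)) := by
  rw [fourier_coe_apply]
  push_cast
  congr 1
  field_simp

lemma fourierCoeffOne_coe (g : AddCircle (2 * π) → ℂ) (m : ℤ) :
    fourierCoeffOne (fun x => g x) m = fourierCoeff g m := by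
  rw [fourierCoeff_eq_intervalIntegral g m 0, zero_add,
    intervalIntegral.integral_of_le Real.two_pi_pos.le, ← integral_Icc_eq_integral_Ioc,
    fourierCoeffOne, circleMeasure]
  congr! 3 with x
  rw [← exp_I_mul_eq_fourier, smul_eq_mul, mul_comm]
  push_cast
  ring_nf

lemma measurePreserving_coe_circleMeasure :
    MeasurePreserving ((↑) : ℝ → AddCircle (2 * π)) circleMeasure volume := by
  have hmk := AddCircle.measurePreserving_mk (2 * π) 0
  rwa [zero_add, Measure.restrict_congr_set Ioc_ae_eq_Icc] at hmk

lemma eLpNorm_coe_circleMeasure {g : AddCircle (2 * π) → ℂ} (hg : AEStronglyMeasurable g volume)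
    (p : ℝ≥0∞) : eLpNorm (fun x : ℝ => g x) p circleMeasure = eLpNorm g p volume :=
  eLpNorm_comp_measurePreserving hg measurePreserving_coe_circleMeasure

lemma haarAddCircle_le_volume : (haarAddCircle : Measure (AddCircle (2 * π))) ≤ volume := by
  refine Measure.le_iff.2 fun s _ => ?_
  rw [AddCircle.volume_eq_smul_haarAddCircle, Measure.smul_apply, smul_eq_mul]
  refine le_mul_of_one_le_left zero_le (ENNReal.one_le_ofReal.2 ?_)
  linarith [Real.pi_gt_three]

lemma cDiffOne_iterate_coe (g : AddCircle (2 * π) → ℂ) (h : ℝ) (r : ℕ) :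
    (cDiffOne h)^[r] (fun x => g x) = fun x : ℝ => (fwdDiff (h : AddCircle (2 * π)))^[r] g x := by
  induction r generalizing g with
  | zero => rfl
  | succ _ ih => exact ih (fwdDiff (h : AddCircle (2 * π)) g)

lemma modSmoothOne_coe_le {g : AddCircle (2 * π) → ℂ} (hg : AEStronglyMeasurable g volume)
    {p : ℝ≥0∞} (hp : 1 ≤ p) (r : ℕ) (δ : ℝ) :
    modSmoothOne r p (fun x => g x) δ ≤ 2 ^ r * eLpNorm g p volume := by
  refine iSup_le fun h => ?_
  rw [cDiffOne_iterate_coe,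
    eLpNorm_coe_circleMeasure (aestronglyMeasurable_fwdDiff_iterate hg _ r)]
  exact eLpNorm_fwdDiff_iterate_le hg hp _ r

/-- The `r`-th derivative of the de la Vallée Poussin mean `η_N g`, as a function on the circle,
for cutoffs `η` that vanish on `[1, ∞)`: only the frequencies `|m| ≤ N` are summed. -/
noncomputable def vdpMeanDeriv (η : ℝ → ℝ) (N r : ℕ) (g : AddCircle (2 * π) → ℂ) :
    C(AddCircle (2 * π), ℂ) :=
  ∑ m ∈ Finset.Icc (-N : ℤ) N,
    ((Complex.I * m) ^ r * (η (|(m : ℝ)| / N) * fourierCoeff g m)) • fourier m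

lemma deriv_iterate_vdpMeanOne_coe {η : ℝ → ℝ} (hη_zero : ∀ ξ, 1 ≤ ξ → η ξ = 0) {N : ℕ}
    (hN : N ≠ 0) (r : ℕ) (g : AddCircle (2 * π) → ℂ) :
    deriv^[r] (vdpMeanOne η N fun x => g x) = fun x : ℝ => vdpMeanDeriv η N r g x := by
  have hsum : vdpMeanOne η N (fun x => g x) = fun x : ℝ => ∑ m ∈ Finset.Icc (-N : ℤ) N,
      (η (|(m : ℝ)| / N) * fourierCoeff g m) * fourier m (x : AddCircle (2 * π)) := by
    funext x
    simp_rw [vdpMeanOne, fourierCoeffOne_coe, exp_I_mul_eq_fourier]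
    refine tsum_eq_sum fun m hm => ?_
    have hN_le : (N : ℝ) ≤ |(m : ℝ)| := by
      rw [Finset.mem_Icc, ← abs_le, not_le] at hm
      exact_mod_cast hm.le
    rw [hη_zero _ ((one_le_div (by positivity)).2 hN_le)]
    simp
  rw [hsum, deriv_iterate_sum_fourier]
  funext x
  simp only [vdpMeanDeriv, ContinuousMap.sum_apply, ContinuousMap.smul_apply, smul_eq_mul]
  refine Finset.sum_congr rfl fun m _ => ?_
  congr 3
  push_cast
  field_simp

lemma fourierCoeff_vdpMeanDeriv {η : ℝ → ℝ} (hη_one : ∀ ξ, ξ ≤ 1 / 2 → η ξ = 1) {N : ℕ} {m : ℤ}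
    (hm : 2 * |m| ≤ N) (r : ℕ) (g : AddCircle (2 * π) → ℂ) :
    fourierCoeff (vdpMeanDeriv η N r g) m = (Complex.I * m) ^ r * fourierCoeff g m := by
  have hle : |(m : ℝ)| / N ≤ 1 / 2 := by
    have : 2 * |(m : ℝ)| ≤ N := by exact_mod_cast hm
    exact div_le_of_le_mul₀ N.cast_nonneg (by norm_num) (by linarith)
  rw [vdpMeanDeriv, fourierCoeff_sum_smul_fourier, if_pos, hη_one _ hle]
  · simp
  · rw [Finset.mem_Icc, ← abs_le]
    linarith [abs_nonneg m]

lemma half_pow_le_eLpNorm_one_vdpMeanDeriv_fejerKernel {η : ℝ → ℝ}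
    (hη_one : ∀ ξ, ξ ≤ 1 / 2 → η ξ = 1) {L M N : ℕ} (hL : L ≠ 0) (hML : 2 * M ≤ L)
    (hMN : 2 * M ≤ N) (r : ℕ) :
    (M : ℝ≥0∞) ^ r / 2 ≤ eLpNorm (vdpMeanDeriv η N r (fejerKernel _ L)) 1 haarAddCircle := by
  have hcoeff : fourierCoeff (vdpMeanDeriv η N r (fejerKernel _ L)) M =
      Complex.I ^ r * (M ^ r * (1 - M / L) : ℝ) := by
    rw [fourierCoeff_vdpMeanDeriv hη_one (by simpa using mod_cast hMN),
      fourierCoeff_fejerKernel hL (by omega)]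
    push_cast
    ring
  have hhalf : (1 / 2 : ℝ) ≤ 1 - M / L := by
    have : (2 * M : ℝ) ≤ L := mod_cast hML
    linarith [div_le_of_le_mul₀ (a := (M : ℝ)) (b := L) (c := 1 / 2) (by positivity) (by norm_num)
      (by linarith)]
  calc (M : ℝ≥0∞) ^ r / 2 = ENNReal.ofReal (M ^ r * (1 / 2)) := by
        rw [ENNReal.ofReal_mul (by positivity), ENNReal.ofReal_pow (by positivity),
          ENNReal.ofReal_natCast, one_div, ENNReal.ofReal_inv_of_pos two_pos, ENNReal.ofReal_ofNat,
          div_eq_mul_inv]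
    _ ≤ ENNReal.ofReal (M ^ r * (1 - M / L)) := by gcongr
    _ = ‖fourierCoeff (vdpMeanDeriv η N r (fejerKernel _ L)) M‖ₑ := by
        rw [hcoeff, ← ofReal_norm, norm_mul, norm_pow, Complex.norm_I, one_pow, one_mul,
          Complex.norm_of_nonneg (mul_nonneg (by positivity) (by linarith))]
    _ ≤ _ := enorm_fourierCoeff_le _ _

lemma fourierCoeff_vdpMeanDeriv_sawtooth {η : ℝ → ℝ} (hη_one : ∀ ξ, ξ ≤ 1 / 2 → η ξ = 1) {N : ℕ}
    {m : ℤ} (hm : m ≠ 0) (hmN : 2 * |m| ≤ N) (r : ℕ) :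
    fourierCoeff (vdpMeanDeriv η N (r + 1) sawtooth) m = -Complex.I ^ r * m ^ r := by
  rw [fourierCoeff_vdpMeanDeriv hη_one hmN, fourierCoeff_sawtooth hm]
  push_cast
  field_simp
  ring

lemma pow_le_eLpNorm_top_vdpMeanDeriv_sawtooth {η : ℝ → ℝ}
    (hη_one : ∀ ξ, ξ ≤ 1 / 2 → η ξ = 1) {M N : ℕ} (hM : M ≠ 0) (hMN : 6 * M ≤ N) {r : ℕ}
    (hr : r ≠ 0) :
    (M : ℝ≥0∞) ^ r ≤ eLpNorm (vdpMeanDeriv η N r sawtooth) ∞ haarAddCircle := by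
  obtain ⟨r, rfl⟩ := Nat.exists_eq_succ_of_ne_zero hr
  set S : ℝ := ∑ j ∈ Finset.range M, ∑ l ∈ Finset.range M, (2 * M - (j - l) : ℝ) ^ r
  have hsum : ∑ j ∈ Finset.range M, ∑ l ∈ Finset.range M,
      fourierCoeff (vdpMeanDeriv η N (r + 1) sawtooth) (2 * M - (j - l)) =
        -Complex.I ^ r * (S : ℂ) := by
    push_cast [S, Finset.mul_sum]
    refine Finset.sum_congr rfl fun j hj => Finset.sum_congr rfl fun l hl => ?_
    rw [Finset.mem_range] at hj hl
    rw [fourierCoeff_vdpMeanDeriv_sawtooth hη_one (by omega) (by grind)]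
    push_cast
    rfl
  have hS : (M : ℝ) * (M * M ^ r) ≤ S := by
    calc (M : ℝ) * (M * M ^ r)
        = ∑ _ ∈ Finset.range M, ∑ _ ∈ Finset.range M, (M : ℝ) ^ r := by
          simp only [Finset.sum_const, Finset.card_range, nsmul_eq_mul]
      _ ≤ S := by
          refine Finset.sum_le_sum fun j hj => Finset.sum_le_sum fun l _ => ?_
          have hj_le : (j : ℝ) ≤ M := mod_cast (Finset.mem_range.1 hj).le
          gcongr
          linarith [l.cast_nonneg (α := ℝ)]
  calc (M : ℝ≥0∞) ^ (r + 1) = ENNReal.ofReal ((M : ℝ)⁻¹ * (M * (M * M ^ r))) := by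
        rw [inv_mul_cancel_left₀ (by positivity), ← pow_succ', ENNReal.ofReal_pow (by positivity),
          ENNReal.ofReal_natCast]
    _ ≤ ENNReal.ofReal ((M : ℝ)⁻¹ * S) := by gcongr
    _ = ‖(M : ℂ)⁻¹ * ∑ j ∈ Finset.range M, ∑ l ∈ Finset.range M,
          fourierCoeff (vdpMeanDeriv η N (r + 1) sawtooth) (2 * M - (j - l))‖ₑ := by
        rw [hsum, ← ofReal_norm, norm_mul, norm_mul, norm_neg, norm_pow, Complex.norm_I, one_pow,
          one_mul, norm_inv, Complex.norm_natCast,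
          Complex.norm_of_nonneg (hS.trans' (by positivity))]
    _ ≤ _ := enorm_sum_fourierCoeff_le_eLpNorm_top
          ((map_continuous _).integrable_of_hasCompactSupport (.of_compactSpace _)) hM _

lemma exists_half_pow_le_eLpNorm_vdpMeanDeriv {p : ℝ≥0∞} (hp : p = 1 ∨ p = ∞) {η : ℝ → ℝ}
    (hη_one : ∀ ξ, ξ ≤ 1 / 2 → η ξ = 1) {r : ℕ} (hr : r ≠ 0) (K : ℕ) :
    ∃ g : AddCircle (2 * π) → ℂ, AEStronglyMeasurable g volume ∧
      eLpNorm g p volume ≤ ENNReal.ofReal (2 * π) ∧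
      ∀ M N : ℕ, M ≠ 0 → M ≤ K → 6 * M ≤ N →
        (M : ℝ≥0∞) ^ r / 2 ≤ eLpNorm (vdpMeanDeriv η N r g) p volume := by
  have hvolume (f : AddCircle (2 * π) → ℂ) : eLpNorm f p haarAddCircle ≤ eLpNorm f p volume :=
    eLpNorm_mono_measure f haarAddCircle_le_volume
  rcases hp with rfl | rfl
  · refine ⟨fejerKernel _ (2 * K + 1), (map_continuous _).aestronglyMeasurable, ?_,
      fun M N _ hMK hMN => (half_pow_le_eLpNorm_one_vdpMeanDeriv_fejerKernel hη_one
        (by omega) (by omega) (by omega) r).trans (hvolume _)⟩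
    rw [AddCircle.volume_eq_smul_haarAddCircle, eLpNorm_one_smul_measure,
      eLpNorm_one_fejerKernel (by omega), mul_one]
  · refine ⟨sawtooth, measurable_sawtooth.aestronglyMeasurable, ?_,
      fun M N hM _ hMN => ENNReal.half_le_self.trans <|
        (pow_le_eLpNorm_top_vdpMeanDeriv_sawtooth hη_one hM hMN hr).trans (hvolume _)⟩
    rw [eLpNorm_exponent_top]
    exact eLpNormEssSup_le_of_ae_bound (.of_forall norm_sawtooth_le)

end TwoPi

lemma exists_nat_forall_lt_tsum_rpow_rpow_one_div {ι : Type*} {B c : ℝ≥0∞} (hB : B ≠ ∞)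
    (hc : c ≠ 0) {q : ℝ} (hq : 0 < q) :
    ∃ K : ℕ, ∀ s : Finset ι, K ≤ s.card → ∀ a : ι → ℝ≥0∞, (∀ k ∈ s, c ≤ a k) →
      B < (∑' k, a k ^ q) ^ (1 / q) := by
  have hcq : c ^ q ≠ 0 := by simp [hc, hq.le]
  have hBq : B ^ q ≠ ∞ := ENNReal.rpow_ne_top_of_nonneg hq.le hB
  obtain ⟨K, hK⟩ := ENNReal.exists_nat_gt (ENNReal.div_ne_top hBq hcq)
  refine ⟨K, fun s hs a ha => ?_⟩
  rw [one_div, ENNReal.lt_rpow_inv_iff hq]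
  calc B ^ q < K * c ^ q := (ENNReal.div_lt_iff (.inl hcq) (.inr hBq)).1 hK
    _ ≤ s.card * c ^ q := by gcongr
    _ = ∑ _ ∈ s, c ^ q := by rw [Finset.sum_const, nsmul_eq_mul]
    _ ≤ ∑ k ∈ s, a k ^ q := Finset.sum_le_sum fun k hk => ENNReal.rpow_le_rpow (ha k hk) hq.le
    _ ≤ ∑' k, a k ^ q := ENNReal.sum_le_tsum s

lemma two_rpow_neg_mul_half_pow (m α : ℕ) :
    (2 : ℝ≥0∞) ^ (-((m + 3 : ℕ) : ℝ) * (α : ℝ)) * (((2 ^ m : ℕ) : ℝ≥0∞) ^ α / 2) =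
      (8 ^ α)⁻¹ / 2 := by
  have hexp : (2 : ℝ≥0∞) ^ (-((m + 3 : ℕ) : ℝ) * (α : ℝ)) = ((2 ^ m) ^ α)⁻¹ * (8 ^ α)⁻¹ := by
    rw [neg_mul, ENNReal.rpow_neg, ← Nat.cast_mul, ENNReal.rpow_natCast, ← ENNReal.mul_inv
      (.inl (by simp)) (.inl (by simp)), ← mul_pow, pow_mul, pow_add]
    norm_num
  rw [hexp, Nat.cast_pow, Nat.cast_ofNat, mul_right_comm, ← mul_div_assoc,
    ENNReal.inv_mul_cancel (by simp) (by simp), one_div, mul_comm, ← div_eq_mul_inv]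

theorem stmt19_general {p : ℝ≥0∞} (hp : p = 1 ∨ p = ∞) {α : ℕ} (hα : α ≠ 0) {η : ℝ → ℝ}
    (hη_one : ∀ ξ : ℝ, ξ ≤ 1 / 2 → η ξ = 1) (hη_zero : ∀ ξ : ℝ, 1 ≤ ξ → η ξ = 0)
    {q : ℝ} (hq : 0 < q) {C : ℝ≥0∞} (hC : C ≠ ∞) (n : ℕ) :
    ∃ f : ℝ → ℂ, Periodic2PiOne f ∧
      AEStronglyMeasurable f circleMeasure ∧
      eLpNorm f p circleMeasure ≠ ∞ ∧
      C * modSmoothOne α p f (1 / 2 ^ n) <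
        (∑' k : ℕ,
          ((2 : ℝ≥0∞) ^ (-((n + 1 + k : ℕ) : ℝ) * (α : ℝ)) *
            eLpNorm (deriv^[α] (vdpMeanOne η (2 ^ (n + 1 + k)) f)) p
              circleMeasure) ^ q) ^ (1 / q) := by
  have hp_one : 1 ≤ p := by rcases hp with rfl | rfl <;> simp
  have hB : C * (2 ^ α * ENNReal.ofReal (2 * π)) ≠ ∞ := by finiteness
  have hc : ((8 : ℝ≥0∞) ^ α)⁻¹ / 2 ≠ 0 := by simp
  obtain ⟨K, hK⟩ := exists_nat_forall_lt_tsum_rpow_rpow_one_div (ι := ℕ) hB hc hq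
  obtain ⟨g, hg, hg_le, hg_deriv⟩ :=
    exists_half_pow_le_eLpNorm_vdpMeanDeriv hp hη_one hα (2 ^ (n + K))
  refine ⟨fun x => g x, fun x => congrArg g (AddCircle.coe_add_period _ x),
    hg.comp_measurePreserving measurePreserving_coe_circleMeasure, ?_, ?_⟩
  · rw [eLpNorm_coe_circleMeasure hg]
    exact ne_top_of_le_ne_top ENNReal.ofReal_ne_top hg_le
  · calc C * modSmoothOne α p (fun x => g x) (1 / 2 ^ n)
        ≤ C * (2 ^ α * ENNReal.ofReal (2 * π)) := by
          gcongr
          exact (modSmoothOne_coe_le hg hp_one α _).trans (by gcongr)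
      _ < _ := hK (Finset.Ico 2 (K + 2)) (by simp) _ fun k hk => ?_
    obtain ⟨hk_ge, hk_lt⟩ := Finset.mem_Ico.1 hk
    obtain ⟨i, rfl⟩ := Nat.exists_eq_add_of_le' hk_ge
    rw [show n + 1 + (i + 2) = n + i + 3 by ring,
      deriv_iterate_vdpMeanOne_coe hη_zero (by positivity),
      eLpNorm_coe_circleMeasure (map_continuous _).aestronglyMeasurable,
      ← two_rpow_neg_mul_half_pow (n + i) α]
    gcongr
    refine hg_deriv _ _ (by positivity) (Nat.pow_le_pow_right two_pos (by omega)) ?_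
    rw [pow_add _ (n + i)]
    omega

/-- For `p ∈ {1,∞}` and `α ∈ ℕ`: for every `q > 0` and every constant
`C > 0` there are `f ∈ L_p(𝕋)` and `n ∈ ℕ` with
`(∑_{k=n+1}^∞ 2^{-qαk} ‖(η_{2^k}f)^{(α)}‖_p^q)^{1/q} > C · ω_α(f,2^{-n})_p`;
i.e. the left-hand inequality of (9.1) cannot hold with a constant independent of `n`, `f`. -/
theorem stmt19 (p : ℝ≥0∞) (hp : p = 1 ∨ p = ∞) (α : ℕ) (hα : 0 < α)
    (η : ℝ → ℝ) (hη_smooth : ContDiffOn ℝ (⊤ : ℕ∞) η (Set.Ici 0))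
    (hη_one : ∀ ξ : ℝ, ξ ≤ 1 / 2 → η ξ = 1) (hη_zero : ∀ ξ : ℝ, 1 ≤ ξ → η ξ = 0) :
    ∀ q : ℝ, 0 < q → ∀ C : ℝ, 0 < C →
      ∃ f : ℝ → ℂ, Periodic2PiOne f ∧
        AEStronglyMeasurable f circleMeasure ∧
        eLpNorm f p circleMeasure ≠ ∞ ∧
        ∃ n : ℕ, 1 ≤ n ∧
          ENNReal.ofReal C * modSmoothOne α p f (1 / 2 ^ n) <
            (∑' k : ℕ,
              ((2 : ℝ≥0∞) ^ (-((n + 1 + k : ℕ) : ℝ) * (α : ℝ)) *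
                eLpNorm (deriv^[α] (vdpMeanOne η (2 ^ (n + 1 + k)) f)) p
                  circleMeasure) ^ q) ^ (1 / q) := by
  intro q hq C _
  obtain ⟨f, hf_periodic, hf_meas, hf_top, hlt⟩ :=
    stmt19_general hp hα.ne' hη_one hη_zero hq ENNReal.ofReal_ne_top 1
  exact ⟨f, hf_periodic, hf_meas, hf_top, 1, le_rfl, hlt⟩
end
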